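/- arXiv:1412.6657 — 3 statements merged into one kernel-verified Lean document; each statement's English description precedes it below -/
import Mathlib

section
/- Let M be a countable totally categorical structure which lies in the algebraic closure of some 0-definable modular strictly minimal set D in M^eq. Then Aut(M), with the topology of pointwise convergence, is an amenable group. -/
open FirstOrder FirstOrder.Language CategoryTheory Set

universe u v

namespace Paper


variable {L : FirstOrder.Language.{u, v}}

/-- `A` is an amalgamation base for the class `K`: any two extensions of `A` in `K`
have a common extension in `K` amalgamating the embeddings over `A`. -/
def IsAmalgamationBase (K : Set (Bundled.{0} L.Structure)) (A : Bundled.{0} L.Structure) : Prop :=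
  A ∈ K ∧ ∀ (B C : Bundled.{0} L.Structure) (f : A ↪[L] B) (g : A ↪[L] C),
    B ∈ K → C ∈ K → ∃ (D : Bundled.{0} L.Structure) (f' : B ↪[L] D) (g' : C ↪[L] D),
      D ∈ K ∧ f'.comp f = g'.comp g

/-- Truss' condition: every element of `K` extends to an amalgamation base. -/
def TrussCondition (K : Set (Bundled.{0} L.Structure)) : Prop :=
  ∀ A ∈ K, ∃ B : Bundled.{0} L.Structure, IsAmalgamationBase K B ∧ Nonempty (A ↪[L] B)

/-- `C` is a cofinal subclass of `K`. -/
def IsCofinalIn (C K : Set (Bundled.{0} L.Structure)) : Prop :=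
  C ⊆ K ∧ ∀ A ∈ K, ∃ B ∈ C, Nonempty (A ↪[L] B)

/-- The weak amalgamation property. -/
def WeakAmalgamation (K : Set (Bundled.{0} L.Structure)) : Prop :=
  ∀ A ∈ K, ∃ (A' : Bundled.{0} L.Structure) (i : A ↪[L] A'), A' ∈ K ∧
    ∀ (B₁ B₂ : Bundled.{0} L.Structure) (f₁ : A' ↪[L] B₁) (f₂ : A' ↪[L] B₂),
      B₁ ∈ K → B₂ ∈ K →
      ∃ (D : Bundled.{0} L.Structure) (g₁ : B₁ ↪[L] D) (g₂ : B₂ ↪[L] D),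
        D ∈ K ∧ (g₁.comp f₁).comp i = (g₂.comp f₂).comp i

/-- The set of copies of `A` inside a structure `C`: substructures of `C` isomorphic to `A`. -/
def copies (A : Bundled.{0} L.Structure) (C : Type) [L.Structure C] :
    Set (L.Substructure C) :=
  {S | Nonempty (A ≃[L] S)}

/-- The Ramsey property for a class of finite structures, phrased with copies:
for every `k` and every pair `A ≤ B` in the class there is `C₀` in the class such that
every `k`-coloring of the copies of `A` in `C₀` is monochromatic on the copies of `A`
lying inside some copy of `B` in `C₀`. -/
def RamseyProperty (C : Set (Bundled.{0} L.Structure)) : Prop :=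
  ∀ (k : ℕ), ∀ A ∈ C, ∀ B ∈ C, Nonempty (A ↪[L] B) →
    ∃ C₀ ∈ C, ∀ ξ : L.Substructure C₀ → Fin (k + 1),
      ∃ B' ∈ copies B C₀, ∀ S₁ ∈ copies A C₀, ∀ S₂ ∈ copies A C₀,
        S₁ ≤ B' → S₂ ≤ B' → ξ S₁ = ξ S₂

/-- `k` is a bound for the embedding Ramsey degree of `A` in the class `K`. -/
def EmbRamseyDegBound (K : Set (Bundled.{0} L.Structure)) (A : Bundled.{0} L.Structure)
    (k : ℕ) : Prop :=
  ∀ (r : ℕ), ∀ B ∈ K, Nonempty (A ↪[L] B) →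
    ∃ C ∈ K, ∀ ξ : (A ↪[L] C) → Fin (r + 1),
      ∃ h : B ↪[L] C, (Set.range fun e : A ↪[L] B => ξ (h.comp e)).ncard ≤ k

/-- The embedding Ramsey degree of `A` in `K`, as an extended natural number
(`⊤` if no finite bound exists). -/
noncomputable def embRamseyDegree (K : Set (Bundled.{0} L.Structure))
    (A : Bundled.{0} L.Structure) : ℕ∞ :=
  sInf {n : ℕ∞ | ∃ k : ℕ, n = k ∧ EmbRamseyDegBound K A k}

/-- `k` is a bound for the (copy) Ramsey degree of `A` in the class `K`. -/
def RamseyDegBound (K : Set (Bundled.{0} L.Structure)) (A : Bundled.{0} L.Structure)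
    (k : ℕ) : Prop :=
  ∀ (r : ℕ), ∀ B ∈ K, Nonempty (A ↪[L] B) →
    ∃ C ∈ K, ∀ ξ : L.Substructure C → Fin (r + 1),
      ∃ B' ∈ copies B (C : Type), (ξ '' {S | S ∈ copies A (C : Type) ∧ S ≤ B'}).ncard ≤ k

/-- `A` has finite (copy) Ramsey degree in `K`. -/
def HasFinRamseyDeg (K : Set (Bundled.{0} L.Structure)) (A : Bundled.{0} L.Structure) : Prop :=
  ∃ k : ℕ, RamseyDegBound K A k

variable {L : FirstOrder.Language.{u, v}}

/-- The space of candidate `L`-structures on `ω`, for a relational language: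
a point records, for each relation symbol, which tuples satisfy it.  It carries
the product topology (with `Bool` discrete), which is the standard logic topology. -/
abbrev StructureSpace (L : FirstOrder.Language.{u, v}) : Type v :=
  ∀ n : ℕ, L.Relations n → (Fin n → ℕ) → Bool

/-- The `L`-structure on `ℕ` coded by a point of the structure space. -/
def pointStructure [L.IsRelational] (x : StructureSpace L) : L.Structure ℕ where
  funMap := fun f _ => isEmptyElim f
  RelMap := fun {n} R t => x n R t = true

/-- The point of the structure space coding a given `L`-structure on `ℕ`. -/
noncomputable def ofStructure (N : L.Structure ℕ) : StructureSpace L :=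
  fun n R t => @decide (@Structure.RelMap L ℕ N n R t) (Classical.propDecidable _)

/-- The logic action of `S∞ = Perm ℕ` on the space of structures. -/
def permSMul (g : Equiv.Perm ℕ) (x : StructureSpace L) : StructureSpace L :=
  fun n R t => x n R fun i => g.symm (t i)

@[simp] theorem permSMul_one (x : StructureSpace L) : permSMul 1 x = x := rfl

theorem permSMul_mul (g h : Equiv.Perm ℕ) (x : StructureSpace L) :
    permSMul (g * h) x = permSMul g (permSMul h x) := rfl

/-- The automorphism group of (the structure coded by) `x`, as a subgroup of `S∞`. -/
def autGroup (x : StructureSpace L) : Subgroup (Equiv.Perm ℕ) where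
  carrier := {g | permSMul g x = x}
  one_mem' := permSMul_one x
  mul_mem' := by
    intro a b ha hb
    show permSMul (a * b) x = x
    rw [permSMul_mul, hb, ha]
  inv_mem' := by
    intro a ha
    show permSMul a⁻¹ x = x
    conv_lhs => rw [← ha]
    rw [← permSMul_mul, inv_mul_cancel, permSMul_one]

/-- The topology of pointwise convergence on `S∞` (and hence, by restriction, on
automorphism groups of structures with universe `ℕ`). -/
instance : TopologicalSpace (Equiv.Perm ℕ) :=
  TopologicalSpace.induced
    (fun g => ((g : ℕ → ℕ), ((g⁻¹ : Equiv.Perm ℕ) : ℕ → ℕ))) inferInstance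

/-- The age of the structure coded by a point of the structure space. -/
def agePoint [L.IsRelational] (x : StructureSpace L) : Set (Bundled.{0} L.Structure) :=
  @FirstOrder.Language.age L ℕ (pointStructure x)

/-- The subspace of the structure space consisting of structures whose age is contained
in `K`. -/
def spaceOf [L.IsRelational] (K : Set (Bundled.{0} L.Structure)) : Set (StructureSpace L) :=
  {x | agePoint x ⊆ K}

/-- `x` is a generic point for `K` : it lies in the space of structures with age `⊆ K`,
and its `S∞`-orbit is comeagre there. -/
def IsGenericPoint [L.IsRelational] (K : Set (Bundled.{0} L.Structure))
    (x : StructureSpace L) : Prop :=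
  x ∈ spaceOf K ∧
    {y : ↥(spaceOf K) | ∃ g : Equiv.Perm ℕ, (y : StructureSpace L) = permSMul g x} ∈
      residual ↥(spaceOf K)

/-- A topological group is extremely amenable if every continuous action on a nonempty
compact Hausdorff space has a fixed point. -/
def ExtremelyAmenable (G : Type*) [Group G] [TopologicalSpace G] : Prop :=
  ∀ (X : Type) [TopologicalSpace X] [CompactSpace X] [T2Space X] [Nonempty X]
    [MulAction G X], ContinuousSMul G X → ∃ x : X, ∀ g : G, g • x = x

/-- A topological group is amenable if every continuous action on a nonempty compact
Hausdorff space supports an invariant Borel probability measure. -/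
def AmenableGroup (G : Type*) [Group G] [TopologicalSpace G] : Prop :=
  ∀ (X : Type) [TopologicalSpace X] [CompactSpace X] [T2Space X] [Nonempty X]
    [MulAction G X], ContinuousSMul G X →
    letI : MeasurableSpace X := borel X
    ∃ μ : MeasureTheory.Measure X, MeasureTheory.IsProbabilityMeasure μ ∧
      ∀ g : G, MeasureTheory.Measure.map (fun p => g • p) μ = μ

/-- Uniform local finiteness: substructures generated by `n` elements have size
bounded by a function of `n`. -/
def IsULF (L : FirstOrder.Language.{u, v}) (N : Type*) [L.Structure N] : Prop :=
  ∃ f : ℕ → ℕ, ∀ s : Finset N, Nat.card (Substructure.closure L (s : Set N)) ≤ f s.card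

/-- `K` is (the universal class given by) the age of a countable uniformly locally
finite structure. -/
def IsAgeOfCountableULF (K : Set (Bundled.{0} L.Structure)) : Prop :=
  ∃ N : Bundled.{0} L.Structure, Countable N ∧ IsULF L N ∧ K = L.age N

variable {L : FirstOrder.Language.{u, v}}


/-- `M` is ω-categorical : its complete theory has, up to isomorphism, a unique
countable model. -/
def OmegaCategorical (L : FirstOrder.Language.{0, 0}) (M : Type) [L.Structure M] : Prop :=
  Cardinal.Categorical Cardinal.aleph0.{0} (L.completeTheory M)

/-- `M` is totally categorical : its complete theory is categorical in every infinite
cardinality. -/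
def TotallyCategorical (L : FirstOrder.Language.{0, 0}) (M : Type) [L.Structure M] : Prop :=
  ∀ κ : Cardinal.{0}, Cardinal.aleph0 ≤ κ → Cardinal.Categorical.{0,0,0} κ (L.completeTheory M)

/-- A formula in one free variable with parameter tuple, coded syntactically. -/
abbrev ParamFormula (L : FirstOrder.Language.{0, 0}) : Type :=
  Σ k : ℕ, L.Formula (Fin k ⊕ Fin 1) × (Fin k → ℕ)

/-- Realization of a parametrized formula at a point, in the structure `M` on `ℕ`. -/
def ParamFormula.RealizeAt (L : FirstOrder.Language.{0, 0}) (M : L.Structure ℕ)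
    (q : ParamFormula L) (b : ℕ) : Prop :=
  @Formula.Realize L ℕ M _ q.2.1 (Sum.elim q.2.2 fun _ => b)

/-- `p` is a complete 1-type over the parameter set `A` of the structure `M` on `ℕ` :
all parameters come from `A`, `p` is finitely satisfiable in `M` and complete. -/
def IsCompleteTypeOver (L : FirstOrder.Language.{0, 0}) (M : L.Structure ℕ) (A : Set ℕ)
    (p : Set (ParamFormula L)) : Prop :=
  (∀ q ∈ p, ∀ i, q.2.2 i ∈ A) ∧
    (∀ s : Finset (ParamFormula L), ↑s ⊆ p →
      ∃ b : ℕ, ∀ q ∈ s, ParamFormula.RealizeAt L M q b) ∧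
    ∀ (k : ℕ) (φ : L.Formula (Fin k ⊕ Fin 1)) (a : Fin k → ℕ), (∀ i, a i ∈ A) →
      (⟨k, (φ, a)⟩ : ParamFormula L) ∈ p ∨ (⟨k, (φ.not, a)⟩ : ParamFormula L) ∈ p

/-- `M` is ω-stable : over every countable parameter set there are only countably many
complete 1-types. -/
def OmegaStable (L : FirstOrder.Language.{0, 0}) (M : L.Structure ℕ) : Prop :=
  ∀ A : Set ℕ, A.Countable → {p | IsCompleteTypeOver L M A p}.Countable

/-- The structure on `ℕ` in the language expanded by the new relation symbols of `L'`,
obtained by adjoining to `M` the interpretations coded by `e`. -/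
def expStructure (L' : FirstOrder.Language.{0, 0}) [L'.IsRelational]
    (M : L.Structure ℕ) (e : StructureSpace L') : (L.sum L').Structure ℕ where
  funMap := fun {n} f t => Sum.casesOn f (fun f => @Structure.funMap L ℕ M n f t)
    (fun f => isEmptyElim f)
  RelMap := fun {n} R t => Sum.casesOn R (fun R => @Structure.RelMap L ℕ M n R t)
    (fun R => e n R t = true)

/-- The expansion `e` of `M` is precompact : every finite structure in the age of `M`
has only finitely many expansions in the age of the expanded structure. -/
def PrecompactExpansion (L' : FirstOrder.Language.{0, 0}) [L'.IsRelational]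
    (M : L.Structure ℕ) (e : StructureSpace L') : Prop :=
  ∀ A : Bundled.{0} L.Structure, A ∈ @FirstOrder.Language.age L ℕ M → Finite A →
    {S : (L.sum L').Structure A.α |
      @FirstOrder.Language.LHom.reduct L (L.sum L') LHom.sumInl A.α S = A.str ∧
        (Bundled.mk A.α S) ∈
          @FirstOrder.Language.age (L.sum L') ℕ (expStructure L' M e)}.Finite

/-- An (abstract) flow of a topological group `G` on a topological space `X`. -/
structure FlowOn (G : Type*) [Group G] [TopologicalSpace G] (X : Type*)
    [TopologicalSpace X] where
  act : G → X → X
  continuous_act : Continuous fun p : G × X => act p.1 p.2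
  act_one : ∀ x, act 1 x = x
  act_mul : ∀ g h x, act (g * h) x = act g (act h x)

variable {G : Type*} [Group G] [TopologicalSpace G] {X : Type*} [TopologicalSpace X]

/-- A flow is minimal if its phase space is a nonempty compact space in which
every orbit is dense. -/
def FlowOn.IsMinimal (F : FlowOn G X) : Prop :=
  Nonempty X ∧ CompactSpace X ∧ ∀ x : X, Dense (Set.range fun g : G => F.act g x)

/-- A flow is a universal minimal flow if it is minimal and admits a continuous
equivariant map to every nonempty compact flow. -/
def FlowOn.IsUniversalMinimal (F : FlowOn G X) : Prop :=
  F.IsMinimal ∧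
    ∀ (Y : Type) [TopologicalSpace Y] [CompactSpace Y] [Nonempty Y] (F' : FlowOn G Y),
      ∃ f : X → Y, Continuous f ∧ ∀ g y, f (F.act g y) = F'.act g (f y)

/-- An imaginary sort of `W` : a `0`-definable equivalence relation `E` on `n`-tuples,
whose classes are the elements of the sort (a sort of `W^eq`). -/
structure ImagSort (L : FirstOrder.Language.{0, 0}) (W : Type) [L.Structure W] where
  n : ℕ
  rel : (Fin n → W) → (Fin n → W) → Prop
  equiv : Equivalence rel
  defble : (∅ : Set W).Definable L
    {v : (Fin n ⊕ Fin n) → W | rel (fun i => v (Sum.inl i)) (fun i => v (Sum.inr i))}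

variable {L : FirstOrder.Language.{0, 0}} {W : Type} [L.Structure W]

/-- A set of tuples is invariant if it is a union of classes of the sort. -/
def ImagSort.Invariant (S : ImagSort L W) (X : Set (Fin S.n → W)) : Prop :=
  ∀ x y, S.rel x y → (x ∈ X ↔ y ∈ X)

/-- The set of classes represented by a set of tuples. -/
def ImagSort.classesOf (S : ImagSort L W) (X : Set (Fin S.n → W)) : Set (Quot S.rel) :=
  Quot.mk S.rel '' X

/-- Realization of a formula whose variables are `k` parameter tuples of length `n`
together with variables `β`. -/
def realizeWithParams {k n : ℕ} {β : Type}
    (φ : L.Formula ((Fin k × Fin n) ⊕ β)) (p : Fin k → Fin n → W) (v : β → W) : Prop :=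
  φ.Realize (Sum.elim (fun q => p q.1 q.2) v)

/-- The set of real elements of `W` algebraic (in `W^eq`) over the set of imaginary
elements coded by `P`. -/
def realAclOverIm (S : ImagSort L W) (P : Set (Fin S.n → W)) : Set W :=
  {b | ∃ (k : ℕ) (φ : L.Formula ((Fin k × Fin S.n) ⊕ Fin 1)) (p : Fin k → Fin S.n → W),
    (∀ j, p j ∈ P) ∧
    (∀ p' : Fin k → Fin S.n → W, (∀ j, S.rel (p j) (p' j)) → ∀ c : W,
      realizeWithParams φ p (fun _ => c) ↔ realizeWithParams φ p' (fun _ => c)) ∧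
    realizeWithParams φ p (fun _ => b) ∧
    {c : W | realizeWithParams φ p (fun _ => c)}.Finite}

/-- The set of imaginary elements (tuples, up to the sort's equivalence relation)
algebraic in `W^eq` over the set of imaginary elements coded by `P`. -/
def imAclOverIm (S : ImagSort L W) (P : Set (Fin S.n → W)) : Set (Fin S.n → W) :=
  {x | ∃ (k : ℕ) (φ : L.Formula ((Fin k × Fin S.n) ⊕ Fin S.n)) (p : Fin k → Fin S.n → W),
    (∀ j, p j ∈ P) ∧
    (∀ p' : Fin k → Fin S.n → W, (∀ j, S.rel (p j) (p' j)) → ∀ y,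
      realizeWithParams φ p y ↔ realizeWithParams φ p' y) ∧
    (∀ y z, S.rel y z → (realizeWithParams φ p y ↔ realizeWithParams φ p z)) ∧
    realizeWithParams φ p x ∧
    (S.classesOf {y | realizeWithParams φ p y}).Finite}

/-- A `0`-definable subset `D` of an imaginary sort is strongly minimal if it has
infinitely many classes and every definable invariant subset is finite or cofinite
on classes. -/
def ImStronglyMinimal (S : ImagSort L W) (D : Set (Fin S.n → W)) : Prop :=
  (S.classesOf D).Infinite ∧
    ∀ s : Set (Fin S.n → W), S.Invariant s → (Set.univ : Set W).Definable L s →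
      (S.classesOf (s ∩ D)).Finite ∨ (S.classesOf (D \ s)).Finite

/-- A strictly minimal subset of an imaginary sort : `0`-definable, invariant, strongly
minimal, with `Aut(W)` acting transitively on its classes. -/
def ImStrictlyMinimal (S : ImagSort L W) (D : Set (Fin S.n → W)) : Prop :=
  (∅ : Set W).Definable L D ∧ S.Invariant D ∧ ImStronglyMinimal S D ∧
    ∀ x ∈ D, ∀ y ∈ D, ∃ e : W ≃[L] W, S.rel (fun i => e (x i)) y

/-- A closed subset of `D` in the pregeometry given by algebraic closure in `W^eq`. -/
def ImAclClosedIn (S : ImagSort L W) (D X : Set (Fin S.n → W)) : Prop :=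
  X ⊆ D ∧ S.Invariant X ∧ imAclOverIm S X ∩ D = X

/-- Modularity of the pregeometry on a subset `D` of an imaginary sort, phrased as the
modular law for the lattice of closed subsets. -/
def ImModularOn (S : ImagSort L W) (D : Set (Fin S.n → W)) : Prop :=
  ∀ X Y Z, ImAclClosedIn S D X → ImAclClosedIn S D Y → ImAclClosedIn S D Z → X ⊆ Z →
    imAclOverIm S (X ∪ (Y ∩ Z)) ∩ D = (imAclOverIm S (X ∪ Y) ∩ D) ∩ Z

/-!
Let `G = Aut(M)`. For a finite `X ⊆ D`, the set `acl(X)` is finite, and every finite partial map of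
`acl(X)` into itself induced by `G` is also induced by an element of `G` mapping `acl(X)` onto
itself: by strong minimality all points of `D` outside the closure of the domain are conjugate over
it, so the domain can be enlarged until its closure contains `acl(X) ∩ D`. As `M ⊆ acl(D)`, `G` is
locally approximated by the finite groups its setwise stabilizers induce on the sets `acl(X)`;
averaging over these finite groups yields almost invariant measures on every compact `G`-flow, and
a limit of them is invariant.

The passage between definability and `G`-invariance is the Ryll–Nardzewski theorem, obtained here by
omitting types: if some type were not isolated, the theory would have a countable model realizing it
and another one omitting it.
-/

universe w

section TypeSpaces

variable {L : FirstOrder.Language.{u, v}} {α β : Type w}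

theorem exists_formula_realize_iff_exists_comp_eq [Finite α] (φ : L.Formula β) (j : α → β) :
    ∃ χ : L.Formula α, ∀ (N : Type*) [L.Structure N] [Nonempty N] (a : α → N),
      χ.Realize a ↔ ∃ v : β → N, φ.Realize v ∧ v ∘ j = a := by
  classical
  let F : Set β := ↑φ.freeVarFinset ∪ range j
  have : Finite F := (φ.freeVarFinset.finite_toSet.union (finite_range j)).to_subtype
  have hφF : ↑φ.freeVarFinset ⊆ F := subset_union_left
  let jF : α → F := fun i => ⟨j i, Or.inr ⟨i, rfl⟩⟩
  let φF : L.Formula F := φ.restrictFreeVar (inclusion hφF)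
  let graph : L.Formula (α ⊕ F) :=
    Formula.iInf fun i => Term.equal (Term.var (Sum.inl i)) (Term.var (Sum.inr (jF i)))
  refine ⟨(φF.relabel Sum.inr ⊓ graph).iExs F, fun N _ _ a => ?_⟩
  have hφF_realize (v : β → N) : φF.Realize (v ∘ (↑)) ↔ φ.Realize v :=
    BoundedFormula.realize_restrictFreeVar' hφF
  have hgraph (w : F → N) : graph.Realize (Sum.elim a w) ↔ w ∘ jF = a := by
    simp only [graph, Formula.realize_iInf, Formula.realize_equal, Term.realize_var, Sum.elim_inl,
      Sum.elim_inr, funext_iff, Function.comp_apply, eq_comm]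
  simp only [Formula.realize_iExs, Formula.realize_inf, Formula.realize_relabel,
    Sum.elim_comp_inr, hgraph]
  constructor
  · rintro ⟨w, hw, hwa⟩
    obtain ⟨v, rfl⟩ := Subtype.val_injective.surjective_comp_right w
    exact ⟨v, (hφF_realize v).1 hw, hwa⟩
  · rintro ⟨v, hv, hva⟩
    exact ⟨v ∘ (↑), (hφF_realize v).2 hv, hva⟩

theorem realize_update_of_notMem_freeVarFinset [DecidableEq α] {N : Type*} [L.Structure N]
    {φ : L.Formula α} {i : α} (hi : i ∉ φ.freeVarFinset) (v : α → N) (x : N) :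
    φ.Realize (Function.update v i x) ↔ φ.Realize v := by
  let φ₀ : L.Formula φ.freeVarFinset := φ.restrictFreeVar id
  have hrestrict (w : α → N) : φ₀.Realize (w ∘ (↑)) ↔ φ.Realize w :=
    BoundedFormula.realize_restrictFreeVar w fun _ => rfl
  rw [← hrestrict, ← hrestrict]
  congr! 1
  ext ⟨k, hk⟩
  exact Function.update_of_ne (ne_of_mem_of_not_mem hk hi) x v

variable {T : L.Theory}

theorem typeOf_eq_typeOf_iff {M N : Type*} [L.Structure M] [Nonempty M] [M ⊨ T] [L.Structure N]
    [Nonempty N] [N ⊨ T] {a : α → M} {b : α → N} :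
    T.typeOf a = T.typeOf b ↔ ∀ φ : L.Formula α, φ.Realize a ↔ φ.Realize b := by
  simp only [SetLike.ext_iff, Theory.CompleteType.mem_typeOf,
    Formula.equivSentence.symm.forall_congr_left, Equiv.symm_symm, Equiv.symm_apply_apply]

/-- The basic clopen set `[φ]` of the space of complete types, for a formula `φ` in the variables
`α` rather than for a sentence with constants naming them. -/
def typesWithFormula (T : L.Theory) (φ : L.Formula α) : Set (T.CompleteType α) :=
  T.typesWith (Formula.equivSentence φ)

theorem typeOf_mem_typesWithFormula {M : Type*} [L.Structure M] [Nonempty M] [M ⊨ T] {a : α → M}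
    {φ : L.Formula α} : T.typeOf a ∈ typesWithFormula T φ ↔ φ.Realize a :=
  Theory.CompleteType.formula_mem_typeOf

theorem isOpen_typesWithFormula (φ : L.Formula α) : IsOpen (typesWithFormula T φ) :=
  CompleteType.isOpen_typesWith _

theorem isTopologicalBasis_range_typesWithFormula :
    TopologicalSpace.IsTopologicalBasis (range (typesWithFormula T (α := α))) := by
  have : range (typesWithFormula T (α := α)) = range T.typesWith :=
    Formula.equivSentence.surjective.range_comp T.typesWith
  exact this ▸ CompleteType.isTopologicalBasis_range_typesWith

theorem exists_typesWithFormula_eq_singleton {p : T.CompleteType α} (hp : IsOpen {p}) :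
    ∃ χ : L.Formula α, typesWithFormula T χ = {p} := by
  obtain ⟨_, ⟨χ, rfl⟩, hpχ, hχ⟩ :=
    isTopologicalBasis_range_typesWithFormula.exists_subset_of_mem_open (mem_singleton p) hp
  exact ⟨χ, hχ.antisymm (singleton_subset_iff.2 hpχ)⟩

/-- The type of the tuple `v ∘ j` when `p` is the type of the tuple `v`; it does not depend on the
choice of `v`, by `restrictType_typeOf`. -/
noncomputable def restrictType (j : α → β) (p : T.CompleteType β) : T.CompleteType α :=
  T.typeOf ((T.exists_modelType_is_realized_in p).choose_spec.choose ∘ j)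

theorem restrictType_typeOf {M : Type*} [L.Structure M] [Nonempty M] [M ⊨ T] (j : α → β)
    (v : β → M) : restrictType j (T.typeOf v) = T.typeOf (v ∘ j) := by
  refine typeOf_eq_typeOf_iff.2 fun φ => ?_
  have hchosen := (T.exists_modelType_is_realized_in (T.typeOf v)).choose_spec.choose_spec
  simpa only [Formula.realize_relabel] using typeOf_eq_typeOf_iff.1 hchosen (φ.relabel j)

theorem restrictType_preimage_typesWithFormula (j : α → β) (φ : L.Formula α) :
    restrictType j ⁻¹' typesWithFormula T φ = typesWithFormula T (φ.relabel j) := by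
  ext p
  obtain ⟨N, v, rfl⟩ := T.exists_modelType_is_realized_in p
  rw [mem_preimage, restrictType_typeOf, typeOf_mem_typesWithFormula, typeOf_mem_typesWithFormula,
    Formula.realize_relabel]

theorem continuous_restrictType (j : α → β) : Continuous (restrictType (T := T) j) := by
  rw [isTopologicalBasis_range_typesWithFormula.continuous_iff]
  rintro _ ⟨φ, rfl⟩
  rw [restrictType_preimage_typesWithFormula]
  exact isOpen_typesWithFormula _

theorem isOpenMap_restrictType [Finite α] (j : α → β) : IsOpenMap (restrictType (T := T) j) := by
  rw [isTopologicalBasis_range_typesWithFormula.isOpenMap_iff]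
  rintro _ ⟨φ, rfl⟩
  obtain ⟨χ, hχ⟩ := exists_formula_realize_iff_exists_comp_eq φ j
  suffices restrictType j '' typesWithFormula T φ = typesWithFormula T χ from
    this ▸ isOpen_typesWithFormula χ
  ext p
  constructor
  · rintro ⟨q, hq, rfl⟩
    obtain ⟨N, v, rfl⟩ := T.exists_modelType_is_realized_in q
    rw [restrictType_typeOf, typeOf_mem_typesWithFormula]
    exact (hχ N _).2 ⟨v, typeOf_mem_typesWithFormula.1 hq, rfl⟩
  · intro hp
    obtain ⟨N, a, rfl⟩ := T.exists_modelType_is_realized_in p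
    obtain ⟨v, hv, rfl⟩ := (hχ N a).1 (typeOf_mem_typesWithFormula.1 hp)
    exact ⟨T.typeOf v, typeOf_mem_typesWithFormula.2 hv, restrictType_typeOf j v⟩

end TypeSpaces

section OmittingTypes

variable {L : FirstOrder.Language.{u, v}} {T : L.Theory}

/-- An enumerated set of elements closed under the Tarski–Vaught test: every satisfiable formula
`ψ(e, x)` with parameters from the enumeration `e` is satisfied by a member of the enumeration. -/
def IsHenkinTuple (L : FirstOrder.Language.{u, v}) {N : Type*} [L.Structure N] (e : ℕ → N) : Prop :=
  ∀ ψ : L.Formula (ℕ ⊕ Unit),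
    (∃ x, ψ.Realize (Sum.elim e fun _ => x)) → ∃ i, ψ.Realize (Sum.elim e fun _ => e i)

theorem IsHenkinTuple.exists_elementarySubstructure {N : Type*} [L.Structure N] {e : ℕ → N}
    (he : IsHenkinTuple L e) : ∃ S : L.ElementarySubstructure N, (S : Set N) = range e := by
  have hfun {n : ℕ} (f : L.Functions n) (x : Fin n → N) (hx : ∀ i, x i ∈ range e) :
      Structure.funMap f x ∈ range e := by
    choose j hj using hx
    obtain rfl : e ∘ j = x := funext hj
    obtain ⟨i, hi⟩ := he (Term.equal (Term.func f fun i => Term.var (Sum.inl (j i)))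
      (Term.var (Sum.inr ()))) ⟨Structure.funMap f (e ∘ j), Formula.realize_equal.2 rfl⟩
    exact ⟨i, (Formula.realize_equal.1 hi).symm⟩
  let S : L.Substructure N := ⟨range e, fun {n} f x hx => hfun f x hx⟩
  refine ⟨⟨S, S.isElementary_of_exists fun n φ x a ha => ?_⟩, rfl⟩
  choose j hj using fun i => (x i).2
  let ψ : L.Formula (ℕ ⊕ Unit) :=
    φ.toFormula.relabel (Sum.elim Empty.elim (Fin.snoc (Sum.inl ∘ j) (Sum.inr ())))
  have hψ (b : N) : ψ.Realize (Sum.elim e fun _ => b) ↔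
      φ.Realize default (Fin.snoc ((↑) ∘ x) b : Fin (n + 1) → N) := by
    simp only [ψ, Formula.realize_relabel, BoundedFormula.realize_toFormula]
    congr! 1
    rw [Function.comp_assoc, Sum.elim_comp_inr, Fin.comp_snoc, ← Function.comp_assoc,
      Sum.elim_comp_inl, (funext hj : e ∘ j = (↑) ∘ x)]
    rfl
  obtain ⟨i, hi⟩ := he ψ ⟨a, (hψ a).2 ha⟩
  exact ⟨⟨e i, i, rfl⟩, (hψ (e i)).1 hi⟩

/-- The types of `ω`-tuples which, for the given `ψ(e, x)`, pass the test of `IsHenkinTuple`. -/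
def henkinTypes (T : L.Theory) (ψ : L.Formula (ℕ ⊕ Unit)) : Set (T.CompleteType ℕ) :=
  typesWithFormula T (ψ.iExs Unit).not ∪
    ⋃ i, typesWithFormula T (ψ.relabel (Sum.elim id fun _ => i))

theorem typeOf_mem_henkinTypes {N : Type*} [L.Structure N] [Nonempty N] [N ⊨ T] {e : ℕ → N}
    {ψ : L.Formula (ℕ ⊕ Unit)} : T.typeOf e ∈ henkinTypes T ψ ↔
      ((∃ x, ψ.Realize (Sum.elim e fun _ => x)) → ∃ i, ψ.Realize (Sum.elim e fun _ => e i)) := by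
  have hcomp (i : ℕ) : e ∘ Sum.elim id (fun _ : Unit => i) = Sum.elim e fun _ => e i :=
    Sum.comp_elim ..
  simp only [henkinTypes, mem_union, mem_iUnion, typeOf_mem_typesWithFormula, Formula.realize_not,
    Formula.realize_iExs, Formula.realize_relabel, hcomp, imp_iff_not_or,
    (Equiv.funUnique Unit N).exists_congr_left]
  rfl

theorem isOpen_henkinTypes (ψ : L.Formula (ℕ ⊕ Unit)) : IsOpen (henkinTypes T ψ) :=
  (isOpen_typesWithFormula _).union (isOpen_iUnion fun _ => isOpen_typesWithFormula _)

theorem dense_henkinTypes (ψ : L.Formula (ℕ ⊕ Unit)) : Dense (henkinTypes T ψ) := by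
  classical
  rw [isTopologicalBasis_range_typesWithFormula.dense_iff]
  rintro _ ⟨φ, rfl⟩ ⟨p, hp⟩
  obtain ⟨N, e, rfl⟩ := T.exists_modelType_is_realized_in p
  by_cases hψ : ∃ x, ψ.Realize (Sum.elim e fun _ => x)
  swap
  · exact ⟨_, hp, typeOf_mem_henkinTypes.2 fun h => (hψ h).elim⟩
  -- A variable occurring neither in `φ` nor in `ψ` is free to name a witness of `∃ x, ψ(e, x)`.
  obtain ⟨x, hx⟩ := hψ
  obtain ⟨i, hi⟩ := Infinite.exists_notMem_finset
    (φ.freeVarFinset ∪ ψ.freeVarFinset.preimage Sum.inl Sum.inl_injective.injOn)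
  obtain ⟨hiφ, hiψ⟩ : i ∉ φ.freeVarFinset ∧ Sum.inl i ∉ ψ.freeVarFinset := by
    simpa using hi
  have hcomm : Sum.elim (Function.update e i x) (fun _ => x) =
      Function.update (Sum.elim e fun _ : Unit => x) (Sum.inl i) x :=
    Sum.update_elim_inl.symm
  refine ⟨T.typeOf (Function.update e i x), ?_, typeOf_mem_henkinTypes.2 fun _ => ⟨i, ?_⟩⟩
  · rw [typeOf_mem_typesWithFormula, realize_update_of_notMem_freeVarFinset hiφ]
    exact typeOf_mem_typesWithFormula.1 hp
  · rwa [Function.update_self, hcomm, realize_update_of_notMem_freeVarFinset hiψ]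

theorem exists_isHenkinTuple_omitting [Countable L.Symbols] {α : Type} [Finite α]
    {p : T.CompleteType α} (hp : ¬ IsOpen {p}) :
    ∃ (N : Theory.ModelType.{u, v, max u v} T) (e : ℕ → N),
      IsHenkinTuple L e ∧ ∀ j : α → ℕ, T.typeOf (e ∘ j) ≠ p := by
  have hopen (j : α → ℕ) : IsOpen (restrictType j ⁻¹' {p}ᶜ) :=
    isOpen_compl_singleton.preimage (continuous_restrictType j)
  have hdense (j : α → ℕ) : Dense (restrictType j ⁻¹' {p}ᶜ) :=
    (dense_compl_singleton_iff_not_open.2 hp).preimage (isOpenMap_restrictType j)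
  have hdense_inter : Dense ((⋂ ψ, henkinTypes T ψ) ∩ ⋂ j : α → ℕ, restrictType j ⁻¹' {p}ᶜ) :=
    (dense_iInter_of_isOpen isOpen_henkinTypes dense_henkinTypes).inter_of_Gδ
      (.iInter_of_isOpen isOpen_henkinTypes) (.iInter_of_isOpen hopen)
      (dense_iInter_of_isOpen hopen hdense)
  have : Nonempty (T.CompleteType ℕ) :=
    Theory.CompleteType.nonempty_iff.2 (Theory.CompleteType.nonempty_iff.1 ⟨p⟩)
  obtain ⟨q, hqψ, hqj⟩ := hdense_inter.nonempty
  obtain ⟨N, e, rfl⟩ := T.exists_modelType_is_realized_in q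
  refine ⟨N, e, fun ψ => typeOf_mem_henkinTypes.1 (mem_iInter.1 hqψ ψ), fun j => ?_⟩
  simpa only [mem_preimage, restrictType_typeOf, mem_compl_singleton_iff] using mem_iInter.1 hqj j

theorem typeOf_coe {N : Type*} [L.Structure N] [Nonempty N] [N ⊨ T]
    (S : L.ElementarySubstructure N) {α : Type*} (a : α → S) :
    T.typeOf (fun i => (a i : N)) = T.typeOf a :=
  typeOf_eq_typeOf_iff.2 fun φ => S.subtype.map_formula φ a

theorem exists_countable_modelType_omitting [Countable L.Symbols] {α : Type} [Finite α]
    {p : T.CompleteType α} (hp : ¬ IsOpen {p}) :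
    ∃ N : Theory.ModelType.{u, v, max u v} T, Countable N ∧ p ∉ T.realizedTypes N α := by
  obtain ⟨N, e, he, hep⟩ := exists_isHenkinTuple_omitting hp
  obtain ⟨S, hS⟩ := he.exists_elementarySubstructure
  refine ⟨Theory.ModelType.of T S, ?_, ?_⟩
  · have : (S : Set N).Countable := hS ▸ countable_range e
    exact this.to_subtype
  · rintro ⟨a : α → S, rfl⟩
    have hrange (i : α) : (a i : N) ∈ range e := hS ▸ (a i).2
    choose j hj using hrange
    refine hep j ?_
    exact (congrArg T.typeOf (funext hj)).trans (typeOf_coe S a)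

end OmittingTypes

section BackAndForth

variable {L : FirstOrder.Language.{u, v}} {M : Type} [L.Structure M]

/-- The group `Aut(M)`, as the group of permutations of `M` underlying an isomorphism `M ≃[L] M`. -/
def automorphismGroup (L : FirstOrder.Language.{u, v}) (M : Type) [L.Structure M] :
    Subgroup (Equiv.Perm M) where
  carrier := range fun e : M ≃[L] M => e.toEquiv
  one_mem' := ⟨.refl L M, rfl⟩
  mul_mem' := by
    rintro _ _ ⟨e, rfl⟩ ⟨f, rfl⟩
    exact ⟨e.comp f, rfl⟩
  inv_mem' := by
    rintro _ ⟨e, rfl⟩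
    exact ⟨e.symm, rfl⟩

theorem realize_smul {α : Type*} (φ : L.Formula α) (g : automorphismGroup L M) (v : α → M) :
    φ.Realize (g • v) ↔ φ.Realize v := by
  obtain ⟨_, e, rfl⟩ := g
  exact StrongHomClass.realize_formula e φ

/-- A set `s` of pairs which is (the graph of) a partial elementary map of `M`. -/
def IsPartialElementary (L : FirstOrder.Language.{u, v}) [L.Structure M] (s : Set (M × M)) : Prop :=
  ∀ φ : L.Formula s, φ.Realize (fun p => p.1.1) ↔ φ.Realize (fun p => p.1.2)

theorem IsPartialElementary.realize_iff {s : Set (M × M)} (hs : IsPartialElementary L s)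
    {β : Type*} {c d : β → M} (hcd : ∀ i, (c i, d i) ∈ s) (φ : L.Formula β) :
    φ.Realize c ↔ φ.Realize d := by
  have h := hs (φ.relabel fun i => ⟨(c i, d i), hcd i⟩)
  rwa [Formula.realize_relabel, Formula.realize_relabel] at h

theorem IsPartialElementary.mono {s t : Set (M × M)} (ht : IsPartialElementary L t) (hst : s ⊆ t) :
    IsPartialElementary L s :=
  ht.realize_iff fun p => hst p.2

theorem IsPartialElementary.swap {s : Set (M × M)} (hs : IsPartialElementary L s) :
    IsPartialElementary L (Prod.swap ⁻¹' s) :=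
  fun φ => (hs.realize_iff (fun p => p.2) φ).symm

theorem isPartialElementary_range {α : Type*} {a b : α → M}
    (hab : ∀ φ : L.Formula α, φ.Realize a ↔ φ.Realize b) :
    IsPartialElementary L (range fun i => (a i, b i)) := by
  intro φ
  choose i hi using fun p : range fun i => (a i, b i) => p.2
  have hfst : (fun p : range fun i => (a i, b i) => p.1.1) = a ∘ i :=
    funext fun p => congrArg Prod.fst (hi p).symm
  have hsnd : (fun p : range fun i => (a i, b i) => p.1.2) = b ∘ i :=
    funext fun p => congrArg Prod.snd (hi p).symm
  rw [hfst, hsnd, ← Formula.realize_relabel, ← Formula.realize_relabel]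
  exact hab _

theorem isPartialElementary_of_finite_subsets {s : Set (M × M)}
    (hs : ∀ t ⊆ s, t.Finite → IsPartialElementary L t) : IsPartialElementary L s := by
  classical
  intro φ
  let φ₀ : L.Formula φ.freeVarFinset := φ.restrictFreeVar id
  have hrestrict (w : s → M) : φ₀.Realize (w ∘ (↑)) ↔ φ.Realize w :=
    BoundedFormula.realize_restrictFreeVar w fun _ => rfl
  have hsub : IsPartialElementary L (Subtype.val '' (φ.freeVarFinset : Set s)) :=
    hs _ (Subtype.coe_image_subset _ _) (φ.freeVarFinset.finite_toSet.image _)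
  rw [← hrestrict, ← hrestrict]
  exact hsub.realize_iff (fun p : φ.freeVarFinset => ⟨p.1, p.2, rfl⟩) φ₀

theorem IsPartialElementary.fst_eq_iff_snd_eq {s : Set (M × M)} (hs : IsPartialElementary L s)
    {x y x' y' : M} (hxy : (x, y) ∈ s) (hxy' : (x', y') ∈ s) : x = x' ↔ y = y' := by
  have hpair : ∀ i, (![x, x'] i, ![y, y'] i) ∈ s := Fin.forall_fin_two.2 ⟨hxy, hxy'⟩
  simpa using hs.realize_iff hpair (Term.equal (Term.var 0) (Term.var 1))

theorem IsPartialElementary.exists_automorphism {s : Set (M × M)} (hs : IsPartialElementary L s)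
    (hfst : ∀ x, ∃ y, (x, y) ∈ s) (hsnd : ∀ y, ∃ x, (x, y) ∈ s) :
    ∃ g : automorphismGroup L M, ∀ p ∈ s, g • p.1 = p.2 := by
  choose f hf using hfst
  choose k hk using hsnd
  let e : M ≃ M := ⟨f, k, fun x => (hs.fst_eq_iff_snd_eq (hk (f x)) (hf x)).2 rfl,
    fun y => (hs.fst_eq_iff_snd_eq (hf (k y)) (hk y)).1 rfl⟩
  have map_fun {n : ℕ} (F : L.Functions n) (x : Fin n → M) :
      f (Structure.funMap F x) = Structure.funMap F (f ∘ x) := by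
    let c : Option (Fin n) → M := fun o => o.elim (Structure.funMap F x) x
    have hF := hs.realize_iff (c := c) (d := f ∘ c) (fun o => hf (c o))
      (Term.equal (Term.var none) (Term.func F fun i => Term.var (some i)))
    exact hF.1 rfl
  have map_rel {n : ℕ} (R : L.Relations n) (x : Fin n → M) :
      Structure.RelMap R (f ∘ x) ↔ Structure.RelMap R x := by
    have hR := hs.realize_iff (c := x) (d := f ∘ x) (fun i => hf (x i))
      (R.formula fun i => Term.var i)
    simpa only [Formula.realize_rel, Term.realize_var] using hR.symm
  exact ⟨⟨e, ⟨e, map_fun, map_rel⟩, rfl⟩,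
    fun p hp => (hs.fst_eq_iff_snd_eq (hf p.1) hp).1 rfl⟩

/-- The finite partial elementary maps of `M`, ordered by extension. -/
abbrev FinitePartialElementary (L : FirstOrder.Language.{u, v}) (M : Type) [L.Structure M] : Type :=
  {s : Set (M × M) // s.Finite ∧ IsPartialElementary L s}

theorem isPartialElementary_sUnion_of_ideal (I : Order.Ideal (FinitePartialElementary L M)) :
    IsPartialElementary L (⋃₀ (Subtype.val '' (I : Set (FinitePartialElementary L M)))) := by
  refine isPartialElementary_of_finite_subsets fun t ht htfin => ?_
  have hdirected : DirectedOn (· ⊆ ·) (Subtype.val '' (I : Set (FinitePartialElementary L M))) := by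
    rintro _ ⟨r, hr, rfl⟩ _ ⟨s, hs, rfl⟩
    obtain ⟨q, hq, hrq, hsq⟩ := I.directed r hr s hs
    exact ⟨q, ⟨q, hq, rfl⟩, hrq, hsq⟩
  obtain ⟨_, ⟨q, -, rfl⟩, htq⟩ := hdirected.exists_mem_subset_of_finite_of_subset_sUnion
    (I.nonempty.image _) htfin ht
  exact q.2.2.mono htq

/-- A model is atomic if the type of each of its finite tuples is isolated. -/
def IsAtomicModel (L : FirstOrder.Language.{u, v}) (M : Type) [L.Structure M] [Nonempty M] : Prop :=
  ∀ (α : Type) [Finite α] (a : α → M), IsOpen {(L.completeTheory M).typeOf a}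

variable [Nonempty M]

theorem IsAtomicModel.exists_extension (hM : IsAtomicModel L M) {α : Type} [Finite α]
    {a b : α → M} (hab : ∀ φ : L.Formula α, φ.Realize a ↔ φ.Realize b) (x : M) :
    ∃ y, ∀ φ : L.Formula (α ⊕ Unit),
      φ.Realize (Sum.elim a fun _ => x) ↔ φ.Realize (Sum.elim b fun _ => y) := by
  obtain ⟨χ, hχ⟩ := exists_typesWithFormula_eq_singleton (hM (α ⊕ Unit) (Sum.elim a fun _ => x))
  have hχ_realize (w : α ⊕ Unit → M) : χ.Realize w ↔
      (L.completeTheory M).typeOf w = (L.completeTheory M).typeOf (Sum.elim a fun _ => x) := by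
    rw [← typeOf_mem_typesWithFormula (T := L.completeTheory M), hχ, mem_singleton_iff]
  have hex : (χ.iExs Unit).Realize a :=
    Formula.realize_iExs.2 ⟨fun _ => x, (hχ_realize _).2 rfl⟩
  obtain ⟨y, hy⟩ := Formula.realize_iExs.1 ((hab _).1 hex)
  exact ⟨y (), fun φ => (typeOf_eq_typeOf_iff.1 ((hχ_realize _).1 hy) φ).symm⟩

theorem IsAtomicModel.exists_insert (hM : IsAtomicModel L M) {s : Set (M × M)} (hfin : s.Finite)
    (hs : IsPartialElementary L s) (x : M) : ∃ y, IsPartialElementary L (insert (x, y) s) := by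
  have := hfin.to_subtype
  obtain ⟨y, hy⟩ := hM.exists_extension hs x
  refine ⟨y, (isPartialElementary_range hy).mono (insert_subset ⟨Sum.inr (), rfl⟩ ?_)⟩
  exact fun p hp => ⟨Sum.inl ⟨p, hp⟩, rfl⟩

theorem IsAtomicModel.exists_insert_symm (hM : IsAtomicModel L M) {s : Set (M × M)}
    (hfin : s.Finite) (hs : IsPartialElementary L s) (y : M) :
    ∃ x, IsPartialElementary L (insert (x, y) s) := by
  obtain ⟨x, hx⟩ := hM.exists_insert (hfin.preimage Prod.swap_injective.injOn) hs.swap y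
  exact ⟨x, hx.swap.mono (insert_subset (mem_insert _ _) fun p hp => mem_insert_of_mem _ hp)⟩

/-- Cofinal sets of finite partial elementary maps whose generic ideals are automorphisms:
`Sum.inl x` asks for `x` to be in the domain, `Sum.inr y` for `y` to be in the range. -/
def IsAtomicModel.cofinals (hM : IsAtomicModel L M) :
    M ⊕ M → Order.Cofinal (FinitePartialElementary L M)
  | Sum.inl x =>
    { carrier := {s | ∃ y, (x, y) ∈ s.1}
      isCofinal := fun ⟨s, hfin, hs⟩ => by
        obtain ⟨y, hy⟩ := hM.exists_insert hfin hs x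
        exact ⟨⟨_, hfin.insert _, hy⟩, ⟨y, mem_insert _ _⟩, subset_insert _ _⟩ }
  | Sum.inr y =>
    { carrier := {s | ∃ x, (x, y) ∈ s.1}
      isCofinal := fun ⟨s, hfin, hs⟩ => by
        obtain ⟨x, hx⟩ := hM.exists_insert_symm hfin hs y
        exact ⟨⟨_, hfin.insert _, hx⟩, ⟨x, mem_insert _ _⟩, subset_insert _ _⟩ }

theorem IsAtomicModel.exists_smul_eq [Countable M] (hM : IsAtomicModel L M) {α : Type} [Finite α]
    {a b : α → M} (hab : ∀ φ : L.Formula α, φ.Realize a ↔ φ.Realize b) :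
    ∃ g : automorphismGroup L M, g • a = b := by
  have := Encodable.ofCountable (M ⊕ M)
  let s₀ : FinitePartialElementary L M :=
    ⟨range fun i => (a i, b i), finite_range _, isPartialElementary_range hab⟩
  let I := Order.idealOfCofinals s₀ hM.cofinals
  let graph : Set (M × M) := ⋃₀ (Subtype.val '' (I : Set (FinitePartialElementary L M)))
  have hmem (c : M ⊕ M) : ∃ s ∈ hM.cofinals c, s ∈ I := Order.cofinal_meets_idealOfCofinals s₀ _ c
  have hfst (x : M) : ∃ y, (x, y) ∈ graph := by
    obtain ⟨s, ⟨y, hy⟩, hs⟩ := hmem (Sum.inl x)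
    exact ⟨y, s, ⟨s, hs, rfl⟩, hy⟩
  have hsnd (y : M) : ∃ x, (x, y) ∈ graph := by
    obtain ⟨s, ⟨x, hx⟩, hs⟩ := hmem (Sum.inr y)
    exact ⟨x, s, ⟨s, hs, rfl⟩, hx⟩
  obtain ⟨g, hg⟩ := (isPartialElementary_sUnion_of_ideal I).exists_automorphism hfst hsnd
  exact ⟨g, funext fun i => hg (a i, b i) ⟨s₀, ⟨s₀, Order.mem_idealOfCofinals s₀ _, rfl⟩, i, rfl⟩⟩

end BackAndForth

section Oligomorphic

open MulAction

variable {G Ω : Type} [Group G] [MulAction G Ω]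

/-- A permutation group is oligomorphic if it has finitely many orbits on `α`-tuples, for every
finite `α`. -/
def IsOligomorphic (G Ω : Type) [Group G] [MulAction G Ω] : Prop :=
  ∀ (α : Type) [Finite α], Finite (orbitRel.Quotient G (α → Ω))

theorem IsOligomorphic.finite_orbits_fixingSubgroup (hG : IsOligomorphic G Ω) {F : Set Ω}
    (hF : F.Finite) (β : Type) [Finite β] :
    Finite (orbitRel.Quotient (fixingSubgroup G F) (β → Ω)) := by
  have := hF.to_subtype
  have := hG (F ⊕ β)
  let tuple (w : β → Ω) : F ⊕ β → Ω := Sum.elim (↑) w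
  have htuple (g : G) (w w' : β → Ω) :
      g • tuple w = tuple w' ↔ g ∈ fixingSubgroup G F ∧ g • w = w' := by
    simp only [funext_iff, Sum.forall, mem_fixingSubgroup_iff, Subtype.forall, Pi.smul_apply, tuple,
      Sum.elim_inl, Sum.elim_inr]
  refine Finite.of_injective (Quotient.map' tuple ?_ : _ → orbitRel.Quotient G (F ⊕ β → Ω)) ?_
  · rintro w w' ⟨g, rfl⟩
    exact ⟨g.1, (htuple _ _ _).2 ⟨g.2, rfl⟩⟩
  · rintro ⟨w⟩ ⟨w'⟩ hw
    obtain ⟨g, hg⟩ := Quotient.exact hw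
    obtain ⟨hgF, hgw⟩ := (htuple _ _ _).1 hg
    exact Quotient.sound ⟨⟨g, hgF⟩, hgw⟩

end Oligomorphic

section OmegaCategoricity

open MulAction Cardinal

variable {L : FirstOrder.Language.{0, 0}} {M : Type} [L.Structure M]

theorem typeOf_comp_equiv {T : L.Theory} {N : Type*} [L.Structure N] [Nonempty N] [N ⊨ T]
    [Nonempty M] [M ⊨ T] {α : Type*} (e : N ≃[L] M) (a : α → N) :
    T.typeOf (e ∘ a) = T.typeOf a :=
  typeOf_eq_typeOf_iff.2 fun φ => StrongHomClass.realize_formula e φ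

theorem infinite_of_model_completeTheory (L : FirstOrder.Language.{0, 0}) (M : Type)
    [L.Structure M] [Infinite M] (N : Type*) [L.Structure N] [N ⊨ L.completeTheory M] :
    Infinite N := by
  have hNM : N ≅[L] M := elementarilyEquivalent_iff.2 (realize_iff_of_model_completeTheory M N)
  exact hNM.infinite_iff.2 inferInstance

variable [Infinite M] [Countable M]

theorem OmegaCategorical.nonempty_equiv (hM : OmegaCategorical L M) (N : Type) [L.Structure N]
    [Countable N] [N ⊨ L.completeTheory M] : Nonempty (N ≃[L] M) := by
  have := infinite_of_model_completeTheory L M N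
  exact hM (.of _ N) (.of _ M) (mk_eq_aleph0 N) (mk_eq_aleph0 M)

variable [Countable L.Symbols] {α : Type} [Finite α]

theorem OmegaCategorical.exists_typeOf_eq (hM : OmegaCategorical L M)
    (p : (L.completeTheory M).CompleteType α) : ∃ a : α → M, (L.completeTheory M).typeOf a = p := by
  obtain ⟨N, v, rfl⟩ := Theory.exists_modelType_is_realized_in _ p
  have := infinite_of_model_completeTheory L M N
  have hL : L.card ≤ ℵ₀ := mk_le_aleph0_iff.2 ‹Countable L.Symbols›
  obtain ⟨S, hvS, hS⟩ := exists_elementarySubstructure_card_eq L (range v) aleph0.{0} le_rfl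
    (by simp) (by simpa using hL) (by simp)
  have : Countable S := mk_le_aleph0_iff.1 (by simpa using hS.le)
  obtain ⟨e⟩ := hM.nonempty_equiv S
  let w : α → S := fun i => ⟨v i, hvS ⟨i, rfl⟩⟩
  exact ⟨e ∘ w, (typeOf_comp_equiv e w).trans (typeOf_coe S w).symm⟩

theorem OmegaCategorical.isOpen_singleton (hM : OmegaCategorical L M)
    (p : (L.completeTheory M).CompleteType α) : IsOpen {p} := by
  by_contra hp
  obtain ⟨N, _, hpN⟩ := exists_countable_modelType_omitting hp
  obtain ⟨e⟩ := hM.nonempty_equiv N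
  obtain ⟨a, rfl⟩ := hM.exists_typeOf_eq p
  exact hpN ⟨e.symm ∘ a, typeOf_comp_equiv e.symm a⟩

theorem OmegaCategorical.isAtomicModel (hM : OmegaCategorical L M) : IsAtomicModel L M :=
  fun _ _ _ => hM.isOpen_singleton _

theorem OmegaCategorical.finite_completeType (hM : OmegaCategorical L M) (α : Type) [Finite α] :
    Finite ((L.completeTheory M).CompleteType α) := by
  have := discreteTopology_iff_isOpen_singleton.2 (hM.isOpen_singleton (α := α))
  exact finite_of_compact_of_discrete

theorem OmegaCategorical.exists_smul_eq_of_typeOf_eq (hM : OmegaCategorical L M) {a b : α → M}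
    (hab : (L.completeTheory M).typeOf a = (L.completeTheory M).typeOf b) :
    ∃ g : automorphismGroup L M, g • a = b :=
  hM.isAtomicModel.exists_smul_eq (typeOf_eq_typeOf_iff.1 hab)

theorem OmegaCategorical.isOligomorphic (hM : OmegaCategorical L M) :
    IsOligomorphic (automorphismGroup L M) M := by
  intro α _
  have := hM.finite_completeType α
  refine Finite.of_injective (β := (L.completeTheory M).CompleteType α)
    (Quotient.lift (L.completeTheory M).typeOf ?_) ?_
  · rintro _ b ⟨g, rfl⟩
    exact typeOf_eq_typeOf_iff.2 fun φ => realize_smul φ g b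
  · rintro ⟨a⟩ ⟨b⟩ hab
    obtain ⟨g, hg⟩ := hM.exists_smul_eq_of_typeOf_eq (Eq.symm hab)
    exact Quotient.sound ⟨g, hg⟩

theorem OmegaCategorical.definable_of_smul_mem (hM : OmegaCategorical L M) {P : Set (α → M)}
    (hP : ∀ g : automorphismGroup L M, ∀ v ∈ P, g • v ∈ P) : (∅ : Set M).Definable L P := by
  have := hM.finite_completeType α
  choose χ hχ using fun p : (L.completeTheory M).CompleteType α =>
    exists_typesWithFormula_eq_singleton (hM.isOpen_singleton p)
  have hχ_realize (p) (v : α → M) : (χ p).Realize v ↔ (L.completeTheory M).typeOf v = p := by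
    rw [← typeOf_mem_typesWithFormula (T := L.completeTheory M), hχ, mem_singleton_iff]
  have hfin := ((L.completeTheory M).typeOf '' P).toFinite
  have hunion : P = ⋃ p ∈ hfin.toFinset, Set.ofPred (χ p).Realize := by
    ext v
    simp only [hfin.mem_toFinset, mem_image, mem_iUnion, mem_ofPred_eq, hχ_realize, exists_prop,
      exists_eq_right']
    refine ⟨fun hv => ⟨v, hv, rfl⟩, ?_⟩
    rintro ⟨a, ha, hav⟩
    obtain ⟨g, rfl⟩ := hM.exists_smul_eq_of_typeOf_eq hav
    exact hP g a ha
  rw [hunion]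
  exact definable_biUnion_finset (fun p => empty_definable_iff.2 ⟨χ p, rfl⟩) _

theorem OmegaCategorical.definable_of_fixingSubgroup_smul_mem (hM : OmegaCategorical L M)
    {F : Set M} (hF : F.Finite) {P : Set (α → M)}
    (hP : ∀ g ∈ fixingSubgroup (automorphismGroup L M) F, ∀ v ∈ P, g • v ∈ P) :
    F.Definable L P := by
  have := hF.to_subtype
  let tuple (v : α → M) : F ⊕ α → M := Sum.elim (↑) v
  have hinvariant (g : automorphismGroup L M) :
      ∀ u ∈ {u | ∃ h : automorphismGroup L M, ∃ v ∈ P, h • tuple v = u},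
        g • u ∈ {u | ∃ h : automorphismGroup L M, ∃ v ∈ P, h • tuple v = u} := by
    rintro _ ⟨h, v, hv, rfl⟩
    exact ⟨g * h, v, hv, mul_smul g h _⟩
  obtain ⟨φ, hφ⟩ := empty_definable_iff.1 (hM.definable_of_smul_mem hinvariant)
  refine definable_iff_exists_formula_sum.2 ⟨φ, ?_⟩
  ext v
  suffices v ∈ P ↔ ∃ h : automorphismGroup L M, ∃ w ∈ P, h • tuple w = tuple v from
    this.trans (Set.ext_iff.1 hφ (tuple v))
  refine ⟨fun hv => ⟨1, v, hv, one_smul _ _⟩, ?_⟩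
  rintro ⟨h, w, hw, hwv⟩
  have hhF : h ∈ fixingSubgroup (automorphismGroup L M) F :=
    (mem_fixingSubgroup_iff _).2 fun m hm => congrFun hwv (Sum.inl ⟨m, hm⟩)
  have hhw : h • w = v := funext fun i => congrFun hwv (Sum.inr i)
  exact hhw ▸ hP h hhF w hw

end OmegaCategoricity

section AlgebraicClosure

open MulAction Pointwise

variable {G Ω : Type*} [Group G] [MulAction G Ω] {A B : Set Ω}

/-- The group-theoretic algebraic closure: the points with finite orbit under the pointwise
stabilizer of `A`. -/
def groupAcl (G : Type*) {Ω : Type*} [Group G] [MulAction G Ω] (A : Set Ω) : Set Ω :=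
  {x | (orbit (fixingSubgroup G A) x).Finite}

theorem mem_groupAcl_iff_relIndex_ne_zero {x : Ω} :
    x ∈ groupAcl G A ↔ (stabilizer G x).relIndex (fixingSubgroup G A) ≠ 0 := by
  have hindex : (stabilizer G x).relIndex (fixingSubgroup G A) =
      (orbit (fixingSubgroup G A) x).ncard := index_stabilizer (fixingSubgroup G A) x
  rw [hindex]
  exact ⟨fun hx => ((ncard_pos hx).2 (nonempty_orbit x)).ne', finite_of_ncard_ne_zero⟩

theorem groupAcl_subset_of_fixingSubgroup_le (hAB : fixingSubgroup G B ≤ fixingSubgroup G A) :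
    groupAcl G A ⊆ groupAcl G B := by
  intro x hx
  refine Set.Finite.subset hx ?_
  rintro _ ⟨g, rfl⟩
  exact ⟨⟨g, hAB g.2⟩, rfl⟩

theorem groupAcl_mono (hAB : A ⊆ B) : groupAcl G A ⊆ groupAcl G B :=
  groupAcl_subset_of_fixingSubgroup_le (fixingSubgroup_antitone G Ω hAB)

theorem subset_groupAcl (A : Set Ω) : A ⊆ groupAcl G A := by
  intro x hx
  refine (finite_singleton x).subset ?_
  rintro _ ⟨g, rfl⟩
  exact (mem_fixingSubgroup_iff G).1 g.2 x hx

theorem groupAcl_subset_groupAcl (hB : B.Finite) (hBA : B ⊆ groupAcl G A) :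
    groupAcl G B ⊆ groupAcl G A := by
  intro x hx
  have := hB.to_subtype
  have hfix : fixingSubgroup G B = ⨅ b : B, stabilizer G (b : Ω) := by
    ext g
    simp [mem_fixingSubgroup_iff, Subgroup.mem_iInf]
  have hindex : (fixingSubgroup G B).relIndex (fixingSubgroup G A) ≠ 0 := hfix ▸
    Subgroup.relIndex_iInf_ne_zero fun b => mem_groupAcl_iff_relIndex_ne_zero.1 (hBA b.2)
  exact mem_groupAcl_iff_relIndex_ne_zero.2
    (Subgroup.relIndex_ne_zero_trans (mem_groupAcl_iff_relIndex_ne_zero.1 hx) hindex)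

theorem smul_mem_groupAcl_smul {x : Ω} (g : G) (hx : x ∈ groupAcl G A) :
    g • x ∈ groupAcl G (g • A) := by
  refine (hx.image (g • ·)).subset ?_
  rintro _ ⟨⟨k, hk⟩, rfl⟩
  refine ⟨(g⁻¹ * k * g) • x, ⟨⟨g⁻¹ * k * g, (mem_fixingSubgroup_iff G).2 fun a ha => ?_⟩, rfl⟩, ?_⟩
  · rw [mul_smul, mul_smul, inv_smul_eq_iff]
    exact (mem_fixingSubgroup_iff G).1 hk _ (smul_mem_smul_set ha)
  · simp only [smul_smul, ← mul_assoc, mul_inv_cancel, one_mul]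
    exact mul_smul k g x

theorem groupAcl_smul (g : G) (A : Set Ω) : groupAcl G (g • A) = g • groupAcl G A := by
  ext x
  rw [mem_smul_set_iff_inv_smul_mem]
  constructor <;> intro hx
  · simpa only [inv_smul_smul] using smul_mem_groupAcl_smul g⁻¹ hx
  · simpa only [smul_inv_smul] using smul_mem_groupAcl_smul g hx

theorem finite_groupAcl [Finite (orbitRel.Quotient (fixingSubgroup G A) Ω)] :
    (groupAcl G A).Finite := by
  have hunion : groupAcl G A =
      ⋃ o ∈ {o : orbitRel.Quotient (fixingSubgroup G A) Ω | o.orbit.Finite}, o.orbit := by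
    ext x
    simp only [mem_iUnion, mem_ofPred_eq, exists_prop, orbitRel.Quotient.mem_orbit,
      exists_eq_right']
    rfl
  rw [hunion]
  exact (toFinite _).biUnion fun o ho => ho

end AlgebraicClosure

section SmoothApproximation

open MulAction Pointwise

variable {G Ω : Type*} [Group G] [MulAction G Ω]

/-- A subset `Y` in which every partial map induced by the group is induced by an element of the
group that preserves `Y`. -/
def IsHomogeneousSubset (G : Type*) {Ω : Type*} [Group G] [MulAction G Ω] (Y : Set Ω) : Prop :=
  ∀ B ⊆ Y, ∀ g : G, g • B ⊆ Y → ∃ h ∈ stabilizer G Y, ∀ b ∈ B, h • b = g • b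

/-- Smooth approximation, in the sense of Kantor, Liebeck and Macpherson, of a permutation group:
finite homogeneous subsets are cofinal among the finite subsets. -/
def SmoothlyApproximated (G Ω : Type*) [Group G] [MulAction G Ω] : Prop :=
  ∀ F : Set Ω, F.Finite → ∃ Y, Y.Finite ∧ F ⊆ Y ∧ IsHomogeneousSubset G Y

theorem IsHomogeneousSubset.preimage {Ω' : Type*} [MulAction G Ω'] {Y : Set Ω'}
    (hY : IsHomogeneousSubset G Y) {f : Ω →[G] Ω'} (hf : Function.Injective f) :
    IsHomogeneousSubset G (f ⁻¹' Y) := by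
  intro B hB g hgB
  have hgfB : g • f '' B ⊆ Y := by
    rintro _ ⟨_, ⟨b, hb, rfl⟩, rfl⟩
    simpa only [mem_preimage, map_smul] using hgB (smul_mem_smul_set hb)
  obtain ⟨h, hhY, hh⟩ := hY (f '' B) (image_subset_iff.2 hB) g hgfB
  refine ⟨h, mem_stabilizer_set.2 fun m => ?_, fun b hb => hf ?_⟩
  · simpa only [mem_preimage, map_smul] using mem_stabilizer_set.1 hhY (f m)
  · simpa only [map_smul] using hh (f b) ⟨b, hb, rfl⟩

/-- A permutation group has locally finite algebraic closure if closures of finite sets are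
finite. -/
def HasLocallyFiniteAcl (G Ω : Type*) [Group G] [MulAction G Ω] : Prop :=
  ∀ A : Set Ω, A.Finite → (groupAcl G A).Finite

/-- The group-theoretic counterpart of a `0`-definable strongly minimal set: an invariant set on
which the points outside the closure of a finite set `A` are conjugate over `A`. -/
structure IsMinimalSubset (G : Type*) {Ω : Type*} [Group G] [MulAction G Ω] (Q : Set Ω) :
    Prop where
  smul_mem : ∀ (g : G), ∀ x ∈ Q, g • x ∈ Q
  exists_smul_eq : ∀ A : Set Ω, A.Finite → ∀ x ∈ Q \ groupAcl G A, ∀ y ∈ Q \ groupAcl G A,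
    ∃ g ∈ fixingSubgroup G A, g • x = y

variable {Q X B : Set Ω}

theorem mem_stabilizer_groupAcl (hfin : HasLocallyFiniteAcl G Ω) (hX : X.Finite) (hXQ : X ⊆ Q)
    (hB : B.Finite) (hQB : groupAcl G X ∩ Q ⊆ groupAcl G B) {g : G} (hgB : g • B ⊆ groupAcl G X) :
    g ∈ stabilizer G (groupAcl G X) := by
  rw [mem_stabilizer_set_iff_smul_set_subset (hfin X hX), ← groupAcl_smul]
  calc
    groupAcl G (g • X) ⊆ groupAcl G (g • B) := by
      refine groupAcl_subset_groupAcl (hX.image _) ?_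
      rw [groupAcl_smul, smul_set_subset_smul_set_iff]
      exact (subset_inter (subset_groupAcl X) hXQ).trans hQB
    _ ⊆ groupAcl G X := groupAcl_subset_groupAcl (hB.image _) hgB

theorem IsMinimalSubset.exists_insert_of_not_subset (hQ : IsMinimalSubset G Q)
    (hfin : HasLocallyFiniteAcl G Ω) (hX : X.Finite) (hXQ : X ⊆ Q)
    (hBX : B ⊆ groupAcl G X) (hQB : ¬ groupAcl G X ∩ Q ⊆ groupAcl G B) {g : G}
    (hgB : g • B ⊆ groupAcl G X) :
    ∃ x ∈ groupAcl G X \ B, ∃ g' : G, g' • insert x B ⊆ groupAcl G X ∧ ∀ b ∈ B, g' • b = g • b := by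
  have hB : B.Finite := (hfin X hX).subset hBX
  have hQgB : ¬ groupAcl G X ∩ Q ⊆ groupAcl G (g • B) := by
    refine fun hQgB => hQB fun x hx => ?_
    have hgX : g ∈ stabilizer G (groupAcl G X) := inv_mem_iff.1 <|
      mem_stabilizer_groupAcl hfin hX hXQ (hB.image (g • ·)) hQgB
        ((inv_smul_smul g B).symm ▸ hBX)
    have hgx := hQgB ⟨(mem_stabilizer_set.1 hgX x).2 hx.1, hQ.smul_mem g x hx.2⟩
    rwa [groupAcl_smul, smul_mem_smul_set_iff] at hgx
  obtain ⟨x, ⟨hxX, hxQ⟩, hxB⟩ := not_subset.1 hQB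
  obtain ⟨y, ⟨hyX, hyQ⟩, hyB⟩ := not_subset.1 hQgB
  have hgx : g • x ∉ groupAcl G (g • B) := by
    rwa [groupAcl_smul, smul_mem_smul_set_iff]
  obtain ⟨u, hu, huy⟩ := hQ.exists_smul_eq (g • B) (hB.image _) (g • x) ⟨hQ.smul_mem g x hxQ, hgx⟩
    y ⟨hyQ, hyB⟩
  have hug (b : Ω) (hb : b ∈ B) : (u * g) • b = g • b := by
    rw [mul_smul, (mem_fixingSubgroup_iff G).1 hu _ (smul_mem_smul_set hb)]
  refine ⟨x, ⟨hxX, fun hx => hxB (subset_groupAcl B hx)⟩, u * g, ?_, hug⟩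
  rintro _ ⟨b, rfl | hb, rfl⟩
  · simpa only [mul_smul, huy] using hyX
  · simpa only [hug b hb] using hgB (smul_mem_smul_set hb)

theorem IsMinimalSubset.isHomogeneousSubset_groupAcl (hQ : IsMinimalSubset G Q)
    (hfin : HasLocallyFiniteAcl G Ω) (hX : X.Finite) (hXQ : X ⊆ Q) :
    IsHomogeneousSubset G (groupAcl G X) := by
  intro B hB g hgB
  let extensions : Set (Set Ω) := {C | C ⊆ groupAcl G X ∧ B ⊆ C ∧
    ∃ h : G, h • C ⊆ groupAcl G X ∧ ∀ b ∈ B, h • b = g • b}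
  have hextensions : extensions.Finite := (hfin X hX).finite_subsets.subset fun C hC => hC.1
  obtain ⟨C, ⟨hCX, hBC, h, hhC, hhg⟩, hCmax⟩ :=
    hextensions.exists_maximal ⟨B, hB, subset_rfl, g, hgB, fun _ _ => rfl⟩
  have hCfin : C.Finite := (hfin X hX).subset hCX
  refine ⟨h, mem_stabilizer_groupAcl hfin hX hXQ hCfin ?_ hhC, hhg⟩
  by_contra hQC
  obtain ⟨x, ⟨hxX, hxC⟩, h', hh'x, hh'h⟩ :=
    hQ.exists_insert_of_not_subset hfin hX hXQ hCX hQC hhC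
  refine hxC (hCmax ⟨insert_subset hxX hCX, hBC.trans (subset_insert x C), h', hh'x, fun b hb => ?_⟩
    (subset_insert x C) (mem_insert x C))
  rw [hh'h b (hBC hb), hhg b hb]

theorem IsMinimalSubset.smoothlyApproximated (hQ : IsMinimalSubset G Q)
    (hfin : HasLocallyFiniteAcl G Ω) {Ω₀ : Type*} [MulAction G Ω₀] {f : Ω₀ →[G] Ω}
    (hf : Function.Injective f) (hacl : ∀ m, ∃ X ⊆ Q, X.Finite ∧ f m ∈ groupAcl G X) :
    SmoothlyApproximated G Ω₀ := by
  intro F hF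
  choose X hXQ hX hmX using hacl
  have hUQ : ⋃ m ∈ F, X m ⊆ Q := iUnion₂_subset fun m _ => hXQ m
  have hU : (⋃ m ∈ F, X m).Finite := hF.biUnion fun m _ => hX m
  exact ⟨f ⁻¹' groupAcl G (⋃ m ∈ F, X m), (hfin _ hU).preimage hf.injOn,
    fun m hm => groupAcl_mono (subset_biUnion_of_mem hm) (hmX m),
    (hQ.isHomogeneousSubset_groupAcl hfin hU hUQ).preimage hf⟩

end SmoothApproximation

section Folner

open MeasureTheory Topology
open scoped BigOperators

/-- A Følner condition for topological groups, in the spirit of Schneider and Thom: up to a small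
neighbourhood of the identity, left translation by the elements of `E` permutes a nonempty finite
family of group elements. -/
def FolnerCondition (G : Type*) [Group G] [TopologicalSpace G] : Prop :=
  ∀ E : Set G, E.Finite → ∀ U ∈ 𝓝 (1 : G), ∃ (H : Type) (_ : Fintype H) (_ : Nonempty H)
    (s : H → G), ∀ g ∈ E, ∃ e : Equiv.Perm H, ∀ h, g * s h * (s (e h))⁻¹ ∈ U

section Empirical

variable {H X : Type*} [Fintype H] [Nonempty H] [TopologicalSpace X] [MeasurableSpace X]

/-- The uniform distribution on a finite family of points. -/
noncomputable def empiricalMeasure (p : H → X) : ProbabilityMeasure X :=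
  ⟨(Fintype.card H : ENNReal)⁻¹ • ∑ h, Measure.dirac (p h), ⟨by
    simp [ENNReal.inv_mul_cancel]⟩⟩

theorem integral_empiricalMeasure [OpensMeasurableSpace X] (p : H → X) (f : C(X, ℝ)) :
    ∫ x, f x ∂(empiricalMeasure p : Measure X) = 𝔼 h, f (p h) := by
  have hf : StronglyMeasurable f := f.continuous.stronglyMeasurable
  have hdirac (x : X) : Integrable f (Measure.dirac x) :=
    integrable_dirac' hf enorm_lt_top
  simp [empiricalMeasure, integral_finsetSum_measure, hdirac, integral_dirac' f _ hf,
    Fintype.expect_eq_sum_div_card, div_eq_inv_mul]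

end Empirical

section Invariance

variable {G X : Type*} [Group G] [TopologicalSpace X] [MeasurableSpace X]

theorem exists_regular_integral_eq [CompactSpace X] [T2Space X] [BorelSpace X]
    (μ : ProbabilityMeasure X) :
    ∃ ν : Measure X, IsProbabilityMeasure ν ∧ ν.Regular ∧
      ∀ f : C(X, ℝ), ∫ x, f x ∂ν = ∫ x, f x ∂(μ : Measure X) := by
  let ν := RealRMK.rieszMeasure (CompactlySupportedContinuousMap.integralPositiveLinearMap
    (μ : Measure X))
  have hν : ν.Regular := RealRMK.regular_rieszMeasure _
  have hintegral (f : C(X, ℝ)) : ∫ x, f x ∂ν = ∫ x, f x ∂(μ : Measure X) :=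
    RealRMK.integral_rieszMeasure _ (CompactlySupportedContinuousMap.continuousMapEquiv f)
  refine ⟨ν, ⟨?_⟩, hν, hintegral⟩
  simpa [measureReal_def, ENNReal.toReal_eq_one_iff] using hintegral 1

variable [MulAction G X] [ContinuousConstSMul G X]

theorem abs_integral_smul_sub_le_of_forall [BorelSpace X] {H : Type*} [Fintype H]
    [Nonempty H] {s : H → G} {e : Equiv.Perm H} {g : G} {f : C(X, ℝ)} {ε : ℝ}
    (hs : ∀ h x, |f ((g * s h * (s (e h))⁻¹) • x) - f x| ≤ ε) (x₀ : X) :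
    |∫ x, f (g • x) ∂(empiricalMeasure fun h => s h • x₀ : Measure X) -
      ∫ x, f x ∂(empiricalMeasure fun h => s h • x₀ : Measure X)| ≤ ε := by
  have hreindex : 𝔼 h, f (s h • x₀) = 𝔼 h, f (s (e h) • x₀) :=
    (Fintype.expect_equiv e _ _ fun _ => rfl).symm
  have hg := integral_empiricalMeasure (fun h => s h • x₀)
    (f.comp ⟨(g • · : X → X), continuous_const_smul g⟩)
  simp only [ContinuousMap.comp_apply, ContinuousMap.coe_mk] at hg
  rw [hg, integral_empiricalMeasure, hreindex, ← Finset.expect_sub_distrib]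
  refine (Finset.abs_expect_le _ _).trans (Finset.expect_le Finset.univ_nonempty fun h _ => ?_)
  simpa only [mul_smul, inv_smul_smul] using hs h (s (e h) • x₀)

theorem map_smul_eq_of_forall_integral_smul_eq [CompactSpace X] [T2Space X] [BorelSpace X]
    {ν : Measure X} [ν.Regular] {g : G}
    (hν : ∀ f : C(X, ℝ), ∫ x, f (g • x) ∂ν = ∫ x, f x ∂ν) : ν.map (g • ·) = ν := by
  have hmap : (ν.map (g • ·)).Regular := Measure.Regular.map (Homeomorph.smul g)
  refine Measure.ext_of_integral_eq_on_compactlySupported fun f => ?_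
  exact (integral_map (measurable_const_smul g).aemeasurable
    f.continuous.aestronglyMeasurable).trans (hν f)

end Invariance

variable {G X : Type*} [Group G] [TopologicalSpace G] [TopologicalSpace X] [CompactSpace X]
  [MulAction G X] [ContinuousSMul G X]

theorem eventually_forall_abs_smul_sub_lt (f : C(X, ℝ)) {ε : ℝ} (hε : 0 < ε) :
    ∀ᶠ g : G in 𝓝 1, ∀ x, |f (g • x) - f x| < ε := by
  have hcont : Continuous fun p : G × X => |f (p.1 • p.2) - f p.2| := by fun_prop
  have hev := isCompact_univ.eventually_forall_of_forall_eventually (x₀ := (1 : G))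
    (P := fun g x => |f (g • x) - f x| < ε) fun x _ =>
      hcont.continuousAt.eventually (gt_mem_nhds (by simpa using hε))
  simpa using hev

variable [T2Space X] [MeasurableSpace X] [BorelSpace X]

theorem FolnerCondition.exists_forall_integral_smul_eq [Nonempty X] (hG : FolnerCondition G) :
    ∃ μ : ProbabilityMeasure X, ∀ (g : G) (f : C(X, ℝ)), ∫ x, f (g • x) ∂(μ : Measure X) =
      ∫ x, f x ∂(μ : Measure X) := by
  let almostInvariant (i : G × C(X, ℝ) × {ε : ℝ // 0 < ε}) : Set (ProbabilityMeasure X) :=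
    {μ | |∫ x, i.2.1 (i.1 • x) ∂(μ : Measure X) - ∫ x, i.2.1 x ∂(μ : Measure X)| ≤ i.2.2}
  have hcont (f : C(X, ℝ)) : Continuous fun μ : ProbabilityMeasure X => ∫ x, f x ∂(μ : Measure X) :=
    ProbabilityMeasure.continuous_integral_boundedContinuousFunction
      (BoundedContinuousFunction.mkOfCompact f)
  have hclosed i : IsClosed (almostInvariant i) := isClosed_le
    ((hcont (i.2.1.comp ⟨(i.1 • · : X → X), continuous_const_smul i.1⟩)).sub (hcont i.2.1)).abs
    continuous_const
  have hfinite (I : Finset (G × C(X, ℝ) × {ε : ℝ // 0 < ε})) :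
      (⋂ i ∈ I, almostInvariant i).Nonempty := by
    have hU : ∀ᶠ k : G in 𝓝 1, ∀ i ∈ I, ∀ x, |i.2.1 (k • x) - i.2.1 x| < i.2.2 :=
      I.eventually_all.2 fun i _ => eventually_forall_abs_smul_sub_lt i.2.1 i.2.2.2
    obtain ⟨H, _, _, s, hs⟩ := hG _ (I.finite_toSet.image Prod.fst) _ hU
    obtain ⟨x₀⟩ := ‹Nonempty X›
    refine ⟨empiricalMeasure fun h => s h • x₀, mem_iInter₂.2 fun i hi => ?_⟩
    obtain ⟨e, he⟩ := hs i.1 ⟨i, hi, rfl⟩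
    exact abs_integral_smul_sub_le_of_forall (fun h x => (he h i hi x).le) x₀
  obtain ⟨μ, hμ⟩ := CompactSpace.iInter_nonempty hclosed hfinite
  refine ⟨μ, fun g f => eq_of_abs_sub_nonpos (le_of_forall_pos_le_add fun ε hε => ?_)⟩
  simpa only [zero_add, almostInvariant, mem_ofPred_eq] using mem_iInter.1 hμ (g, f, ⟨ε, hε⟩)

theorem FolnerCondition.amenableGroup (hG : FolnerCondition G) : AmenableGroup G := by
  intro X _ _ _ _ _ _
  let _ : MeasurableSpace X := borel X
  have : BorelSpace X := ⟨rfl⟩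
  obtain ⟨μ, hμ⟩ := hG.exists_forall_integral_smul_eq (X := X)
  obtain ⟨ν, hνprob, hνreg, hν⟩ := exists_regular_integral_eq μ
  refine ⟨ν, hνprob, fun g => map_smul_eq_of_forall_integral_smul_eq fun f => ?_⟩
  have hνg := hν (f.comp ⟨(g • · : X → X), continuous_const_smul g⟩)
  simp only [ContinuousMap.comp_apply, ContinuousMap.coe_mk] at hνg
  rw [hνg, hμ, hν]

end Folner

section FolnerOfSmoothApproximation

open MulAction Pointwise Topology

variable {G : Type*} {Ω : Type} [Group G] [MulAction G Ω]

theorem exists_transversal_fixingSubgroup {Y : Set Ω} (hY : Y.Finite) :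
    ∃ (H : Type) (_ : Fintype H) (_ : Nonempty H) (s : H → G), ∀ k ∈ stabilizer G Y,
      ∃ e : Equiv.Perm H, ∀ h, k * s h * (s (e h))⁻¹ ∈ fixingSubgroup G Y := by
  have := hY.to_subtype
  let restrict : stabilizer G Y →* Equiv.Perm Y := toPermHom (stabilizer G Y) Y
  choose s hs using fun h : restrict.range => h.2
  refine ⟨restrict.range, Fintype.ofFinite _, inferInstance, fun h => s h, fun k hk =>
    ⟨Equiv.mulLeft ⟨restrict ⟨k, hk⟩, ⟨k, hk⟩, rfl⟩, fun h => ?_⟩⟩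
  set h' := Equiv.mulLeft (⟨restrict ⟨k, hk⟩, ⟨k, hk⟩, rfl⟩ : restrict.range) h with hh'
  have hker : restrict (⟨k, hk⟩ * s h * (s h')⁻¹) = 1 := by
    rw [map_mul, map_mul, map_inv, hs, hs, hh', mul_inv_eq_one]
    rfl
  exact (mem_fixingSubgroup_iff G).2 fun y hy =>
    congrArg Subtype.val (Equiv.congr_fun hker ⟨y, hy⟩)

theorem SmoothlyApproximated.folnerCondition [TopologicalSpace G] (h : SmoothlyApproximated G Ω)
    (hG : ∀ U ∈ 𝓝 (1 : G), ∃ F : Set Ω, F.Finite ∧ (fixingSubgroup G F : Set G) ⊆ U) :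
    FolnerCondition G := by
  intro E hE U hU
  obtain ⟨F, hF, hFU⟩ := hG U hU
  obtain ⟨Y, hY, hFY, hhom⟩ := h (F ∪ ⋃ g ∈ E, g⁻¹ • F)
    (hF.union (hE.biUnion fun g _ => hF.image _))
  obtain ⟨H, _, _, s, hs⟩ := exists_transversal_fixingSubgroup (G := G) hY
  refine ⟨H, ‹_›, ‹_›, s, fun g hg => ?_⟩
  have hgY : g⁻¹ • F ⊆ Y :=
    (subset_biUnion_of_mem (u := fun g => g⁻¹ • F) hg).trans (subset_union_right.trans hFY)
  obtain ⟨k, hkY, hkg⟩ := hhom (g⁻¹ • F) hgY g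
    ((smul_inv_smul g F).symm ▸ subset_union_left.trans hFY)
  obtain ⟨e, he⟩ := hs k hkY
  refine ⟨e, fun h => hFU ?_⟩
  have hgk : g * k⁻¹ ∈ fixingSubgroup G F := (mem_fixingSubgroup_iff G).2 fun a ha => by
    have hka := hkg (g⁻¹ • a) (smul_mem_smul_set ha)
    rw [smul_inv_smul, smul_eq_iff_eq_inv_smul] at hka
    rw [mul_smul, ← hka, smul_inv_smul]
  have hsplit : g * s h * (s (e h))⁻¹ = g * k⁻¹ * (k * s h * (s (e h))⁻¹) := by group
  rw [hsplit]
  exact mul_mem hgk (fixingSubgroup_antitone G Ω (subset_union_left.trans hFY) (he h))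

end FolnerOfSmoothApproximation

section PointwiseTopology

open MulAction Topology

theorem exists_fixingSubgroup_subset_of_mem_nhds_one {U : Set (Equiv.Perm ℕ)}
    (hU : U ∈ 𝓝 (1 : Equiv.Perm ℕ)) :
    ∃ F : Set ℕ, F.Finite ∧ (fixingSubgroup (Equiv.Perm ℕ) F : Set (Equiv.Perm ℕ)) ⊆ U := by
  rw [nhds_induced, Filter.mem_comap] at hU
  obtain ⟨V, hV, hVU⟩ := hU
  rw [nhds_prod_eq, nhds_pi, nhds_pi, Filter.mem_prod_iff] at hV
  obtain ⟨V₁, hV₁, V₂, hV₂, hVV⟩ := hV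
  obtain ⟨F₁, hF₁, t₁, ht₁, hV₁⟩ := Filter.mem_pi.1 hV₁
  obtain ⟨F₂, hF₂, t₂, ht₂, hV₂⟩ := Filter.mem_pi.1 hV₂
  refine ⟨F₁ ∪ F₂, hF₁.union hF₂, fun g hg => hVU (hVV ⟨hV₁ fun i hi => ?_, hV₂ fun i hi => ?_⟩)⟩
  · have hgi : g i = i := (mem_fixingSubgroup_iff _).1 hg i (Or.inl hi)
    simp only [hgi]
    exact mem_of_mem_nhds (ht₁ i)
  · have hgi : g⁻¹ i = i := (mem_fixingSubgroup_iff _).1 (inv_mem hg) i (Or.inr hi)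
    simp only [hgi]
    exact mem_of_mem_nhds (ht₂ i)

theorem exists_fixingSubgroup_subset_of_mem_nhds_one_subgroup {G : Subgroup (Equiv.Perm ℕ)}
    {U : Set G} (hU : U ∈ 𝓝 (1 : G)) :
    ∃ F : Set ℕ, F.Finite ∧ (fixingSubgroup G F : Set G) ⊆ U := by
  rw [nhds_subtype_eq_comap, Filter.mem_comap] at hU
  obtain ⟨V, hV, hVU⟩ := hU
  obtain ⟨F, hF, hFV⟩ := exists_fixingSubgroup_subset_of_mem_nhds_one hV
  exact ⟨F, hF, fun g hg => hVU (hFV ((mem_fixingSubgroup_iff _).2 fun i hi =>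
    (mem_fixingSubgroup_iff G).1 hg i hi))⟩

theorem SmoothlyApproximated.amenableGroup {G : Subgroup (Equiv.Perm ℕ)}
    (hG : SmoothlyApproximated G ℕ) : AmenableGroup G :=
  (hG.folnerCondition fun _ => exists_fixingSubgroup_subset_of_mem_nhds_one_subgroup).amenableGroup

end PointwiseTopology

section Imaginaries

open MulAction Pointwise

variable {L : FirstOrder.Language.{0, 0}} {M : Type} [L.Structure M] {S : ImagSort L M}
  {D : Set (Fin S.n → M)} {A : Set (M ⊕ Quot S.rel)}

theorem smul_mem_of_definable_empty {α : Type*} {P : Set (α → M)} (hP : (∅ : Set M).Definable L P)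
    (g : automorphismGroup L M) {v : α → M} (hv : v ∈ P) : g • v ∈ P := by
  obtain ⟨φ, rfl⟩ := empty_definable_iff.1 hP
  exact (realize_smul φ g v).2 hv

theorem ImagSort.rel_smul (g : automorphismGroup L M) {x y : Fin S.n → M} (h : S.rel x y) :
    S.rel (g • x) (g • y) :=
  smul_mem_of_definable_empty S.defble g (v := Sum.elim x y) h

/-- The action of `Aut(M)` on the elements of an imaginary sort. -/
instance ImagSort.mulAction (S : ImagSort L M) :
    MulAction (automorphismGroup L M) (Quot S.rel) where
  smul g := Quot.map (g • ·) fun _ _ => S.rel_smul g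
  one_smul := by
    rintro ⟨x⟩
    exact congrArg (Quot.mk S.rel) (one_smul _ x)
  mul_smul := by
    rintro g h ⟨x⟩
    exact congrArg (Quot.mk S.rel) (mul_smul g h x)

theorem ImagSort.exists_fixingSubgroup_le (hA : A.Finite) :
    ∃ F : Set M, F.Finite ∧
      fixingSubgroup (automorphismGroup L M) F ≤ fixingSubgroup (automorphismGroup L M) A := by
  choose support hfin hsupport using fun a : M ⊕ Quot S.rel =>
    show ∃ F : Set M, F.Finite ∧ ∀ g ∈ fixingSubgroup (automorphismGroup L M) F, g • a = a by
      obtain m | q := a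
      · exact ⟨{m}, finite_singleton m, fun g hg =>
          congrArg Sum.inl ((mem_fixingSubgroup_iff _).1 hg m rfl)⟩
      · obtain ⟨v, rfl⟩ := Quot.exists_rep q
        exact ⟨range v, finite_range v, fun g hg => congrArg (Sum.inr ∘ Quot.mk S.rel)
          (funext fun i => (mem_fixingSubgroup_iff _).1 hg (v i) ⟨i, rfl⟩)⟩
  refine ⟨⋃ a ∈ A, support a, hA.biUnion fun a _ => hfin a, fun g hg =>
    (mem_fixingSubgroup_iff _).2 fun a ha => hsupport a g ?_⟩
  exact fixingSubgroup_antitone _ M (subset_biUnion_of_mem (u := support) ha) hg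

theorem ImagSort.hasLocallyFiniteAcl (S : ImagSort L M)
    (hM : IsOligomorphic (automorphismGroup L M) M) :
    HasLocallyFiniteAcl (automorphismGroup L M) (M ⊕ Quot S.rel) := by
  intro A hA
  obtain ⟨F, hF, hFA⟩ := exists_fixingSubgroup_le hA
  have := hM.finite_orbits_fixingSubgroup hF Unit
  have := hM.finite_orbits_fixingSubgroup hF (Fin S.n)
  let real : orbitRel.Quotient (fixingSubgroup (automorphismGroup L M) F) (Unit → M) →
      orbitRel.Quotient (fixingSubgroup (automorphismGroup L M) A) (M ⊕ Quot S.rel) :=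
    Quotient.map' (fun v => Sum.inl (v ())) <| by
      rintro _ v ⟨g, rfl⟩
      exact ⟨⟨g, hFA g.2⟩, rfl⟩
  let imaginary : orbitRel.Quotient (fixingSubgroup (automorphismGroup L M) F) (Fin S.n → M) →
      orbitRel.Quotient (fixingSubgroup (automorphismGroup L M) A) (M ⊕ Quot S.rel) :=
    Quotient.map' (fun v => Sum.inr (Quot.mk S.rel v)) <| by
      rintro _ v ⟨g, rfl⟩
      exact ⟨⟨g, hFA g.2⟩, rfl⟩
  have hsurj : Function.Surjective (Sum.elim real imaginary) := by
    rintro ⟨m | q⟩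
    · exact ⟨Sum.inl (Quotient.mk'' fun _ => m), rfl⟩
    · obtain ⟨v, rfl⟩ := Quot.exists_rep q
      exact ⟨Sum.inr (Quotient.mk'' v), rfl⟩
  have := Finite.of_surjective _ hsurj
  exact finite_groupAcl

theorem ImagSort.smul_mem_classesOf (hD : (∅ : Set M).Definable L D) (g : automorphismGroup L M)
    {x : M ⊕ Quot S.rel} (hx : x ∈ Sum.inr '' S.classesOf D) :
    g • x ∈ Sum.inr '' S.classesOf D := by
  obtain ⟨_, ⟨v, hv, rfl⟩, rfl⟩ := hx
  exact ⟨_, ⟨g • v, smul_mem_of_definable_empty hD g hv, rfl⟩, rfl⟩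

section OmegaCategorical

variable [Infinite M] [Countable M] [Countable L.Symbols]

theorem ImStronglyMinimal.finite_diff_orbit (hmin : ImStronglyMinimal S D)
    (hM : OmegaCategorical L M) (hD : (∅ : Set M).Definable L D) (hA : A.Finite)
    {x : M ⊕ Quot S.rel}
    (hx : x ∈ Sum.inr '' S.classesOf D \ groupAcl (automorphismGroup L M) A) :
    (Sum.inr '' S.classesOf D \
      orbit (fixingSubgroup (automorphismGroup L M) A) x).Finite := by
  set K := fixingSubgroup (automorphismGroup L M) A
  let O : Set (Fin S.n → M) := {v | Sum.inr (Quot.mk S.rel v) ∈ orbit K x}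
  have hO_invariant : S.Invariant O := fun v w hvw => by
    rw [mem_ofPred_eq, mem_ofPred_eq, Quot.sound hvw]
  have hO_definable : (univ : Set M).Definable L O := by
    obtain ⟨F, hF, hFA⟩ := ImagSort.exists_fixingSubgroup_le hA
    refine (hM.definable_of_fixingSubgroup_smul_mem hF fun g hg v hv => ?_).mono (subset_univ F)
    exact mem_orbit_of_mem_orbit (⟨g, hFA hg⟩ : K) hv
  obtain hfin | hcofin := hmin.2 O hO_invariant hO_definable
  · refine absurd ((hfin.image Sum.inr).subset ?_) hx.2
    rintro y ⟨k, rfl⟩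
    obtain ⟨_, ⟨v, hv, rfl⟩, hvk⟩ := ImagSort.smul_mem_classesOf hD k.1 hx.1
    exact ⟨_, ⟨v, ⟨⟨k, hvk.symm⟩, hv⟩, rfl⟩, hvk⟩
  · refine (hcofin.image Sum.inr).subset ?_
    rintro _ ⟨⟨_, ⟨v, hv, rfl⟩, rfl⟩, hvO⟩
    exact ⟨_, ⟨v, ⟨hv, hvO⟩, rfl⟩, rfl⟩

theorem ImStronglyMinimal.isMinimalSubset (hmin : ImStronglyMinimal S D)
    (hM : OmegaCategorical L M) (hD : (∅ : Set M).Definable L D) :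
    IsMinimalSubset (automorphismGroup L M) (Sum.inr '' S.classesOf D : Set (M ⊕ Quot S.rel)) where
  smul_mem g _ hx := ImagSort.smul_mem_classesOf hD g hx
  exists_smul_eq A hA x hx y hy := by
    have hcofinite :=
      (hmin.finite_diff_orbit hM hD hA hx).union (hmin.finite_diff_orbit hM hD hA hy)
    obtain ⟨z, hzQ, hz⟩ :=
      (hmin.1.image Sum.inr_injective.injOn).exists_notMem_finite hcofinite
    obtain ⟨hzx, hzy⟩ : z ∈ orbit (fixingSubgroup (automorphismGroup L M) A) x ∧
        z ∈ orbit (fixingSubgroup (automorphismGroup L M) A) y := by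
      simpa [hzQ] using hz
    obtain ⟨g, hg⟩ := (orbit_eq_iff.2 hzx).symm.trans (orbit_eq_iff.2 hzy) ▸ mem_orbit_self y
    exact ⟨g, g.2, hg⟩

end OmegaCategorical

theorem exists_mem_groupAcl_of_mem_realAclOverIm {m : M} (hm : m ∈ realAclOverIm S D) :
    ∃ X ⊆ (Sum.inr '' S.classesOf D : Set (M ⊕ Quot S.rel)), X.Finite ∧
      Sum.inl m ∈ groupAcl (automorphismGroup L M) X := by
  obtain ⟨k, φ, p, hpD, hφ, hφm, hfin⟩ := hm
  refine ⟨range fun j => Sum.inr (Quot.mk S.rel (p j)), ?_, finite_range _,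
    (hfin.image Sum.inl).subset ?_⟩
  · rintro _ ⟨j, rfl⟩
    exact ⟨_, ⟨p j, hpD j, rfl⟩, rfl⟩
  · rintro _ ⟨⟨g, hg⟩, rfl⟩
    have hpg (j : Fin k) : S.rel (p j) (g • p j) :=
      S.equiv.symm (S.equiv.quot_mk_eq_iff _ _ |>.1
        (Sum.inr_injective ((mem_fixingSubgroup_iff _).1 hg _ ⟨j, rfl⟩)))
    refine ⟨g • m, (hφ _ hpg (g • m)).2 ?_, rfl⟩
    have hsmul : g • Sum.elim (fun q : Fin k × Fin S.n => p q.1 q.2) (fun _ : Fin 1 => m) =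
        Sum.elim (fun q => (g • p q.1) q.2) fun _ => g • m := by
      ext (i | i) <;> rfl
    rw [realizeWithParams, ← hsmul]
    exact (realize_smul φ g _).2 hφm

theorem ImStronglyMinimal.smoothlyApproximated [Infinite M] [Countable M] [Countable L.Symbols]
    (hmin : ImStronglyMinimal S D) (hM : OmegaCategorical L M)
    (hD : (∅ : Set M).Definable L D) (hacl : ∀ m, m ∈ realAclOverIm S D) :
    SmoothlyApproximated (automorphismGroup L M) M :=
  (hmin.isMinimalSubset hM hD).smoothlyApproximated (S.hasLocallyFiniteAcl hM.isOligomorphic)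
    (f := ⟨Sum.inl, fun _ _ => rfl⟩) Sum.inl_injective
    fun m => exists_mem_groupAcl_of_mem_realAclOverIm (hacl m)

end Imaginaries

theorem autGroup_ofStructure_eq_automorphismGroup {L : FirstOrder.Language.{0, 0}} [L.IsRelational]
    [inst : L.Structure ℕ] : autGroup (ofStructure inst) = automorphismGroup L ℕ := by
  ext g
  have hg : g ∈ autGroup (ofStructure inst) ↔ ∀ (n : ℕ) (R : L.Relations n) (t : Fin n → ℕ),
      Structure.RelMap R (g.symm ∘ t) ↔ Structure.RelMap R t := by
    change permSMul g (ofStructure inst) = ofStructure inst ↔ _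
    simp only [funext_iff, permSMul, ofStructure, decide_eq_decide, Function.comp_def]
  rw [hg]
  constructor
  · intro h
    refine ⟨⟨g, isEmptyElim, fun R t => ?_⟩, rfl⟩
    have hR := h _ R (g ∘ t)
    rw [← Function.comp_assoc, Equiv.symm_comp_self, Function.id_comp] at hR
    exact hR.symm
  · rintro ⟨e, rfl⟩ n R t
    exact e.symm.map_rel R t

theorem statement11_general (L : FirstOrder.Language.{0, 0}) [L.IsRelational]
    [inst : L.Structure ℕ] (hL : Countable (Σ n, L.Relations n)) (hcat : OmegaCategorical L ℕ)
    (S : ImagSort L ℕ) (D : Set (Fin S.n → ℕ)) (hdef : (∅ : Set ℕ).Definable L D)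
    (hmin : ImStronglyMinimal S D) (hacl : ∀ a : ℕ, a ∈ realAclOverIm S D) :
    AmenableGroup ↥(autGroup (ofStructure inst)) := by
  have : IsEmpty (Σ n, L.Functions n) := ⟨fun f => isEmptyElim f.2⟩
  have : Countable L.Symbols :=
    inferInstanceAs (Countable ((Σ n, L.Functions n) ⊕ Σ n, L.Relations n))
  rw [autGroup_ofStructure_eq_automorphismGroup]
  exact (hmin.smoothlyApproximated hcat hdef hacl).amenableGroup

/-- A countable totally categorical structure lying in the algebraic closure of a
`0`-definable modular strictly minimal set `D` (in `M^eq`) has amenable automorphism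
group. -/
theorem statement11 (L : FirstOrder.Language.{0, 0}) [L.IsRelational]
    [inst : L.Structure ℕ] (hL : Countable (Σ n, L.Relations n))
    (htc : TotallyCategorical L ℕ)
    (S : ImagSort L ℕ) (D : Set (Fin S.n → ℕ))
    (hmin : ImStrictlyMinimal S D) (hmod : ImModularOn S D)
    (hacl : ∀ a : ℕ, a ∈ realAclOverIm S D) :
    AmenableGroup ↥(autGroup (ofStructure inst)) :=
  statement11_general L hL (htc Cardinal.aleph0 le_rfl) S D hmin.1 hmin.2.2.1 hacl

end Paper
end

section
/- Let M be the Fraïssé limit of a Fraïssé class K, equipped with a freeness relation P which satisfies JN-amalgamation. If the class K satisfies the Ramsey property, then for every strict free sequence ā = a₁,…,a_k from M, the type of ā is the same for all permutations of ā. -/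
open FirstOrder FirstOrder.Language CategoryTheory Set

universe u v

namespace Paper


variable {L : FirstOrder.Language.{u, v}}

variable {L : FirstOrder.Language.{u, v}}

/-- A tuple realizes a (not necessarily complete) type over `∅`. -/
def RealizesType (L : FirstOrder.Language.{0, 0}) (M : Type) [L.Structure M] {n : ℕ}
    (a : Fin n → M) (t : Set (L.Formula (Fin n))) : Prop :=
  ∀ φ ∈ t, φ.Realize a

/-- A sequence is free (w.r.t. the family of types `P`) if it realizes a type from `P`. -/
def IsFreeSeq (L : FirstOrder.Language.{0, 0}) (M : Type) [L.Structure M]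
    (P : ∀ n : ℕ, Set (Set (L.Formula (Fin n)))) {n : ℕ} (a : Fin n → M) : Prop :=
  ∃ t ∈ P n, RealizesType L M a t

/-- Two tuples have the same (complete) type over `∅`. -/
def SameType (L : FirstOrder.Language.{0, 0}) (M : Type) [L.Structure M] {n : ℕ}
    (a b : Fin n → M) : Prop :=
  ∀ φ : L.Formula (Fin n), φ.Realize a ↔ φ.Realize b

/-- `P` is a freeness relation on `M` : a family of types over `∅` containing `n`-types
for all `n ≥ 1`, closed under permutations of variables, such that any free sequence
can be extended by a quantifier-free copy of any other free sequence to a free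
sequence. -/
def IsFreenessRelation (L : FirstOrder.Language.{0, 0}) (M : Type) [L.Structure M]
    (P : ∀ n : ℕ, Set (Set (L.Formula (Fin n)))) : Prop :=
  (∀ n : ℕ, 0 < n → (P n).Nonempty) ∧
    (∀ (n : ℕ) (t : Set (L.Formula (Fin n))), t ∈ P n → ∀ σ : Equiv.Perm (Fin n),
      (fun φ : L.Formula (Fin n) => φ.relabel σ) '' t ∈ P n) ∧
    ∀ (n k : ℕ) (a : Fin n → M) (b : Fin k → M),
      IsFreeSeq L M P a → IsFreeSeq L M P b →
      ∃ a' : Fin k → M, IsFreeSeq L M P (Fin.append a a') ∧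
        ∀ φ : L.Formula (Fin k), φ.IsQF → (φ.Realize a' ↔ φ.Realize b)

/-- `r` is a (strict) linear ordering of the set `U`. -/
def IsLinearOrderOn {M : Type} (r : M → M → Prop) (U : Set M) : Prop :=
  (∀ x ∈ U, ¬r x x) ∧
    (∀ x ∈ U, ∀ y ∈ U, ∀ z ∈ U, r x y → r y z → r x z) ∧
    ∀ x ∈ U, ∀ y ∈ U, x ≠ y → r x y ∨ r y x

/-- The freeness relation `P` on `M` satisfies JN-amalgamation : every free sequence
`ā` admits a finite family `F` of tuples of the same type as `ā`, no two distinct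
members of which share a pair of elements, such that every linear ordering of `∪F`
enumerates some member of `F`. -/
def HasJNAmalgamation (L : FirstOrder.Language.{0, 0}) (M : Type) [L.Structure M]
    (P : ∀ n : ℕ, Set (Set (L.Formula (Fin n)))) : Prop :=
  ∀ (k : ℕ) (a : Fin k → M), IsFreeSeq L M P a →
    ∃ F : Finset (Fin k → M),
      (∀ c ∈ F, SameType L M c a) ∧
      (∀ c₁ ∈ F, ∀ c₂ ∈ F, c₁ ≠ c₂ → (Set.range c₁ ∩ Set.range c₂).Subsingleton) ∧
      ∀ r : M → M → Prop, IsLinearOrderOn r (⋃ c ∈ F, Set.range c) →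
        ∃ c ∈ F, ∀ i j : Fin k, i < j → r (c i) (c j)

/-- A free sequence `ā` is strict in `M` : every finite subset of `M` carries a linear
order `r` such that for any two tuples of the same type as `ā` generating the same
substructure, the `r`-preserving map between them is elementary. -/
def IsStrictSeq (L : FirstOrder.Language.{0, 0}) (M : Type) [L.Structure M]
    (P : ∀ n : ℕ, Set (Set (L.Formula (Fin n)))) {k : ℕ} (a : Fin k → M) : Prop :=
  IsFreeSeq L M P a ∧
    ∀ s : Set M, s.Finite →
      ∃ r : M → M → Prop, IsLinearOrderOn r s ∧
        ∀ c₁ c₂ : Fin k → M, Set.range c₁ ⊆ s → Set.range c₂ ⊆ s →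
          SameType L M c₁ a → SameType L M c₂ a →
          Substructure.closure L (Set.range c₁) = Substructure.closure L (Set.range c₂) →
          ∀ σ τ : Equiv.Perm (Fin k),
            (∀ i j : Fin k, i < j → r (c₁ (σ i)) (c₁ (σ j))) →
            (∀ i j : Fin k, i < j → r (c₂ (τ i)) (c₂ (τ j))) →
            SameType L M (c₁ ∘ σ) (c₂ ∘ τ)

/-!
By an ultrafilter limit, strictness yields a single linear order `r` of `M` for which any two
`r`-increasing enumerations of tuples of the type of `ā` that generate the same substructure have
the same type; finite orders would not do, as the structures in `K` may be infinite. Colour a copy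
of `⟨ā⟩` in `M` by whether it is generated by an `r`-increasing tuple of the type of `ā`. Apply the
Ramsey property to the substructure generated by the JN-families of `ā` and of `ā ∘ σ`: an
automorphism `g` moves it to a monochromatic position. The order `r (g x) (g y)` enumerates a member
of each family. The member of type `ā` fixes the colour, so the copy generated by the member of type
`ā ∘ σ` also has an increasing generating tuple of type `ā`. The choice of `r` then makes the types
of `ā` and `ā ∘ σ` equal.
-/

section TermGenerated

variable {M N ι : Type*} [L.Structure M] [L.Structure N]

theorem mem_closure_range_iff_exists_term {a : ι → M} {x : M} :
    x ∈ Substructure.closure L (range a) ↔ ∃ t : L.Term ι, t.realize a = x := by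
  refine ⟨fun hx => ?_, ?_⟩
  · obtain ⟨t, rfl⟩ := Substructure.mem_closure_iff_exists_term.1 hx
    refine ⟨t.relabel (rangeSplitting a), ?_⟩
    rw [Term.realize_relabel, comp_rangeSplitting]
  · rintro ⟨t, rfl⟩
    exact t.realize_mem a fun i => Substructure.subset_closure (mem_range_self i)

theorem exists_embedding_closure_range {a : ι → M} {b : ι → N}
    (h : ∀ φ : L.Formula ι, φ.IsAtomic → (φ.Realize a ↔ φ.Realize b)) :
    ∃ f : Substructure.closure L (range a) ↪[L] N,
      ∀ (x : Substructure.closure L (range a)) (t : L.Term ι),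
        t.realize a = x → f x = t.realize b := by
  have realize_eq_iff (t₁ t₂ : L.Term ι) :
      t₁.realize a = t₂.realize a ↔ t₁.realize b = t₂.realize b := by
    simpa only [Formula.realize_equal] using h (t₁.equal t₂) (.equal _ _)
  choose T hT using fun x : Substructure.closure L (range a) =>
    mem_closure_range_iff_exists_term.1 x.2
  have realize_T {x : Substructure.closure L (range a)} {t : L.Term ι}
      (ht : t.realize a = x) : (T x).realize b = t.realize b :=
    (realize_eq_iff _ _).1 ((hT x).trans ht.symm)
  refine ⟨{ toFun := fun x => (T x).realize b, inj' := ?_, map_fun' := ?_, map_rel' := ?_ },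
    fun x t => realize_T⟩
  · intro x y hxy
    exact Subtype.ext ((hT x).symm.trans (((realize_eq_iff _ _).2 hxy).trans (hT y)))
  · intro n F x
    refine realize_T (t := Term.func F fun i => T (x i)) ?_
    simp only [Term.realize_func, hT]
    rfl
  · intro n R x
    have hR := h (R.formula fun i => T (x i)) (.rel _ _)
    simp only [Formula.realize_rel, hT] at hR
    exact hR.symm

theorem nonempty_closure_range_equiv {a : ι → M} {b : ι → N}
    (h : ∀ φ : L.Formula ι, φ.IsAtomic → (φ.Realize a ↔ φ.Realize b)) :
    Nonempty (Substructure.closure L (range a) ≃[L] Substructure.closure L (range b)) := by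
  obtain ⟨f, hf⟩ := exists_embedding_closure_range h
  have range_f : f.toHom.range = Substructure.closure L (range b) := by
    ext y
    rw [Hom.mem_range, mem_closure_range_iff_exists_term]
    constructor
    · rintro ⟨x, rfl⟩
      obtain ⟨t, ht⟩ := mem_closure_range_iff_exists_term.1 x.2
      exact ⟨t, (hf x t ht).symm⟩
    · rintro ⟨t, rfl⟩
      exact ⟨⟨t.realize a, mem_closure_range_iff_exists_term.2 ⟨t, rfl⟩⟩, hf _ t rfl⟩
  exact range_f ▸ ⟨f.equivRange⟩

theorem map_closure_range (f : M →[L] N) (c : ι → M) :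
    (Substructure.closure L (range c)).map f = Substructure.closure L (range (f ∘ c)) := by
  rw [Substructure.map_closure, range_comp]

end TermGenerated

section RamseyInLimit

variable {M : Type} [L.Structure M]

theorem RamseyProperty.exists_equiv_monochromatic (hRam : RamseyProperty (L.age M))
    (hM : L.IsUltrahomogeneous M) {m : ℕ} (ξ : L.Substructure M → Fin (m + 1))
    {A B : L.Substructure M} (hA : A.FG) (hB : B.FG) :
    ∃ g : M ≃[L] M, ∀ S₁ S₂ : L.Substructure M, S₁ ≤ B → S₂ ≤ B →
      Nonempty (A ≃[L] S₁) → Nonempty (A ≃[L] S₂) → ξ (S₁.map g.toHom) = ξ (S₂.map g.toHom) := by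
  by_cases hAB : Nonempty (A ↪[L] B)
  swap
  · refine ⟨.refl L M, fun S₁ _ hS₁ _ ⟨e⟩ _ => (hAB ?_).elim⟩
    exact ⟨(Substructure.inclusion hS₁).comp e.toEmbedding⟩
  obtain ⟨C, ⟨-, ⟨e⟩⟩, hC⟩ := hRam m _ (age.fg_substructure hA) _ (age.fg_substructure hB) hAB
  obtain ⟨B', ⟨i⟩, hB'⟩ := hC fun S => ξ (S.map e.toHom)
  let j : B ↪[L] C := B'.subtype.comp i.toEmbedding
  obtain ⟨g, hg⟩ := hM B hB (e.comp j)
  have exists_copy (S : L.Substructure M) (hSB : S ≤ B) (hS : Nonempty (A ≃[L] S)) :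
      ∃ T ∈ copies (Bundled.of A) C, T ≤ B' ∧ T.map e.toHom = S.map g.toHom := by
    let f : S ↪[L] C := j.comp (Substructure.inclusion hSB)
    refine ⟨f.toHom.range, hS.map f.equivRange.comp, ?_, ?_⟩
    · rintro _ ⟨x, rfl⟩
      exact (i (Substructure.inclusion hSB x)).2
    · have e_comp_f : e.comp f = g.toEmbedding.comp S.subtype :=
        congrArg (Embedding.comp · (Substructure.inclusion hSB)) hg
      calc f.toHom.range.map e.toHom = (e.comp f).toHom.range := (Hom.range_comp _ _).symm
        _ = (g.toEmbedding.comp S.subtype).toHom.range := by rw [e_comp_f]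
        _ = S.subtype.toHom.range.map g.toHom := Hom.range_comp S.subtype.toHom g.toHom
        _ = S.map g.toHom := by rw [Substructure.range_subtype]
  refine ⟨g, fun S₁ S₂ hS₁ hS₂ hA₁ hA₂ => ?_⟩
  obtain ⟨T₁, hT₁, hT₁B', map_T₁⟩ := exists_copy S₁ hS₁ hA₁
  obtain ⟨T₂, hT₂, hT₂B', map_T₂⟩ := exists_copy S₂ hS₂ hA₂
  rw [← map_T₁, ← map_T₂]
  exact hB' T₁ hT₁ T₂ hT₂ hT₁B' hT₂B'

theorem RamseyProperty.exists_equiv_forall_iff (hRam : RamseyProperty (L.age M))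
    (hM : L.IsUltrahomogeneous M) (Q : L.Substructure M → Prop)
    {A B : L.Substructure M} (hA : A.FG) (hB : B.FG) :
    ∃ g : M ≃[L] M, ∀ S₁ S₂ : L.Substructure M, S₁ ≤ B → S₂ ≤ B →
      Nonempty (A ≃[L] S₁) → Nonempty (A ≃[L] S₂) → (Q (S₁.map g.toHom) ↔ Q (S₂.map g.toHom)) := by
  classical
  obtain ⟨g, hg⟩ := hRam.exists_equiv_monochromatic hM
    (fun S => if Q S then (1 : Fin 2) else 0) hA hB
  refine ⟨g, fun S₁ S₂ hS₁ hS₂ hA₁ hA₂ => ?_⟩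
  have same_colour := hg S₁ S₂ hS₁ hS₂ hA₁ hA₂
  split_ifs at same_colour <;> simp_all

end RamseyInLimit

section LinearOrders

variable {M : Type}

/-- The enumeration `c` is strictly increasing with respect to `r`. -/
def IsIncreasing {k : ℕ} (r : M → M → Prop) (c : Fin k → M) : Prop :=
  ∀ i j, i < j → r (c i) (c j)

theorem IsLinearOrderOn.onFun {N : Type} {r : N → N → Prop} {s : Set M} {t : Set N} {g : M → N}
    (hr : IsLinearOrderOn r t) (hst : MapsTo g s t) (hg : InjOn g s) :
    IsLinearOrderOn (Function.onFun r g) s :=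
  ⟨fun _ hx => hr.1 _ (hst hx),
    fun _ hx _ hy _ hz => hr.2.1 _ (hst hx) _ (hst hy) _ (hst hz),
    fun _ hx _ hy hxy => hr.2.2 _ (hst hx) _ (hst hy) (hg.ne hx hy hxy)⟩

theorem eventually_mem_of_le_atTop {α : Type*} {l : Filter (Finset α)} (hl : l ≤ Filter.atTop)
    (x : α) : ∀ᶠ u in l, x ∈ u :=
  hl ((Filter.eventually_ge_atTop {x}).mono fun _ => Finset.singleton_subset_iff.1)

theorem IsLinearOrderOn.ultralimit {R : Finset M → M → M → Prop}
    (hR : ∀ u : Finset M, IsLinearOrderOn (R u) u) {U : Ultrafilter (Finset M)}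
    (hU : ↑U ≤ (Filter.atTop : Filter (Finset M))) :
    IsLinearOrderOn (fun x y => ∀ᶠ u in U, R u x y) univ := by
  have hmem := eventually_mem_of_le_atTop hU
  refine ⟨fun x _ hxx => ?_, fun x _ y _ z _ hxy hyz => ?_, fun x _ y _ hne => ?_⟩
  · obtain ⟨u, hxu, hx⟩ := (hxx.and (hmem x)).exists
    exact (hR u).1 x hx hxu
  · filter_upwards [hxy, hyz, hmem x, hmem y, hmem z] with u hxy hyz hx hy hz
    exact (hR u).2.1 x hx y hy z hz hxy hyz
  · rw [← Ultrafilter.eventually_or]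
    filter_upwards [hmem x, hmem y] with u hx hy
    exact (hR u).2.2 x hx y hy hne

end LinearOrders

section StrictSequences

variable {L : FirstOrder.Language.{0, 0}} {M : Type} [L.Structure M] {k : ℕ} {a b c : Fin k → M}

theorem SameType.symm (h : SameType L M a b) : SameType L M b a :=
  fun φ => (h φ).symm

theorem SameType.trans (hab : SameType L M a b) (hbc : SameType L M b c) : SameType L M a c :=
  fun φ => (hab φ).trans (hbc φ)

theorem SameType.comp {m : ℕ} (h : SameType L M a b) (f : Fin m → Fin k) :
    SameType L M (a ∘ f) (b ∘ f) := fun φ => by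
  rw [← Formula.realize_relabel, ← Formula.realize_relabel]
  exact h _

theorem sameType_equiv_comp (g : M ≃[L] M) (a : Fin k → M) : SameType L M (g ∘ a) a :=
  fun φ => StrongHomClass.realize_formula g φ

theorem SameType.nonempty_closure_equiv (h : SameType L M a b) :
    Nonempty (Substructure.closure L (range a) ≃[L] Substructure.closure L (range b)) :=
  nonempty_closure_range_equiv fun φ _ => h φ

theorem SameType.comp_symm {σ : Equiv.Perm (Fin k)} (h : SameType L M c (a ∘ σ)) :
    SameType L M (c ∘ σ.symm) a := by
  simpa only [Function.comp_assoc, Equiv.self_comp_symm, Function.comp_id] using h.comp σ.symm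

theorem IsFreeSeq.comp_perm {P : ∀ n : ℕ, Set (Set (L.Formula (Fin n)))}
    (hP : ∀ t ∈ P k, ∀ σ : Equiv.Perm (Fin k),
      (fun φ : L.Formula (Fin k) => φ.relabel σ) '' t ∈ P k)
    (h : IsFreeSeq L M P a) (σ : Equiv.Perm (Fin k)) : IsFreeSeq L M P (a ∘ σ) := by
  obtain ⟨t, ht, hat⟩ := h
  refine ⟨_, hP t ht σ.symm, ?_⟩
  rintro _ ⟨φ, hφ, rfl⟩
  rw [Formula.realize_relabel, Function.comp_assoc, Equiv.self_comp_symm, Function.comp_id]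
  exact hat φ hφ

/-- The linear order `r` of `s` witnesses strictness of `a` on `s`: the increasing enumerations of
two tuples of the type of `a` generating the same substructure have the same type. The increasing
enumerations themselves are quantified over, so they realize the type of a permutation of `a`. -/
def IsCoherentOrderOn (L : FirstOrder.Language.{0, 0}) {M : Type} [L.Structure M] {k : ℕ}
    (r : M → M → Prop) (a : Fin k → M) (s : Set M) : Prop :=
  IsLinearOrderOn r s ∧
    ∀ (c d : Fin k → M) (σ τ : Equiv.Perm (Fin k)), range c ⊆ s → range d ⊆ s →
      SameType L M c (a ∘ σ) → SameType L M d (a ∘ τ) →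
      Substructure.closure L (range c) = Substructure.closure L (range d) →
      IsIncreasing r c → IsIncreasing r d → SameType L M c d

theorem IsStrictSeq.exists_isCoherentOrderOn {P : ∀ n : ℕ, Set (Set (L.Formula (Fin n)))}
    (h : IsStrictSeq L M P a) {s : Set M} (hs : s.Finite) :
    ∃ r : M → M → Prop, IsCoherentOrderOn L r a s := by
  obtain ⟨r, hr, hrs⟩ := h.2 s hs
  refine ⟨r, hr, fun c d σ τ hcs hds hc hd hcd hrc hrd => ?_⟩
  have range_comp_symm (e : Fin k → M) (ρ : Equiv.Perm (Fin k)) : range (e ∘ ρ.symm) = range e :=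
    ρ.symm.surjective.range_comp e
  have comp_symm_comp (e : Fin k → M) (ρ : Equiv.Perm (Fin k)) : (e ∘ ρ.symm) ∘ ρ = e := by
    rw [Function.comp_assoc, Equiv.symm_comp_self, Function.comp_id]
  have := hrs (c ∘ σ.symm) (d ∘ τ.symm) (by rwa [range_comp_symm]) (by rwa [range_comp_symm])
    hc.comp_symm hd.comp_symm (by rwa [range_comp_symm, range_comp_symm]) σ τ
    (by simpa only [IsIncreasing, Function.comp_apply, Equiv.symm_apply_apply] using hrc)
    (by simpa only [IsIncreasing, Function.comp_apply, Equiv.symm_apply_apply] using hrd)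
  rwa [comp_symm_comp, comp_symm_comp] at this

theorem exists_isCoherentOrderOn_univ
    (h : ∀ s : Finset M, ∃ r : M → M → Prop, IsCoherentOrderOn L r a s) :
    ∃ r : M → M → Prop, IsCoherentOrderOn L r a univ := by
  choose R hlin hcoh using h
  let U : Ultrafilter (Finset M) := Ultrafilter.of Filter.atTop
  have hU : (U : Filter (Finset M)) ≤ Filter.atTop := Ultrafilter.of_le _
  have eventually_range_subset (c : Fin k → M) : ∀ᶠ u : Finset M in U, range c ⊆ u := by
    simp only [range_subset_iff]
    exact Filter.eventually_all.2 fun i => eventually_mem_of_le_atTop hU (c i)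
  have eventually_isIncreasing {c : Fin k → M}
      (hc : IsIncreasing (fun x y => ∀ᶠ u in U, R u x y) c) :
      ∀ᶠ u in U, IsIncreasing (R u) c := by
    simpa only [IsIncreasing, Filter.eventually_all] using hc
  refine ⟨_, .ultralimit hlin hU, fun c d σ τ _ _ hc hd hcd hrc hrd => ?_⟩
  obtain ⟨u, hcu, hdu, hRc, hRd⟩ := ((eventually_range_subset c).and <|
    (eventually_range_subset d).and <|
    (eventually_isIncreasing hrc).and (eventually_isIncreasing hrd)).exists
  exact hcoh u c d σ τ hcu hdu hc hd hcd hRc hRd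

/-- A finite family of tuples of the type of `a`, one of which is increasing whichever way the union
of the family is linearly ordered. This is the family provided by JN-amalgamation, without the
condition that distinct members share at most one element. -/
def IsUnavoidableFamily (L : FirstOrder.Language.{0, 0}) {M : Type} [L.Structure M] {k : ℕ}
    (F : Finset (Fin k → M)) (a : Fin k → M) : Prop :=
  (∀ c ∈ F, SameType L M c a) ∧
    ∀ r : M → M → Prop, IsLinearOrderOn r (⋃ c ∈ F, range c) → ∃ c ∈ F, IsIncreasing r c

theorem HasJNAmalgamation.exists_isUnavoidableFamily
    {P : ∀ n : ℕ, Set (Set (L.Formula (Fin n)))} (hJN : HasJNAmalgamation L M P)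
    (ha : IsFreeSeq L M P a) : ∃ F : Finset (Fin k → M), IsUnavoidableFamily L F a := by
  obtain ⟨F, hFa, -, hF⟩ := hJN k a ha
  exact ⟨F, hFa, hF⟩

theorem IsUnavoidableFamily.exists_isIncreasing_comp {F : Finset (Fin k → M)}
    (hF : IsUnavoidableFamily L F a) {r : M → M → Prop} (hr : IsLinearOrderOn r univ)
    (g : M ≃[L] M) : ∃ c ∈ F, SameType L M c a ∧ IsIncreasing r (g ∘ c) := by
  obtain ⟨c, hcF, hc⟩ := hF.2 _ (hr.onFun (mapsTo_univ g _) g.injective.injOn)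
  exact ⟨c, hcF, hF.1 c hcF, hc⟩

/-- The colouring to which the Ramsey property is applied: `S` is generated by an `r`-increasing
tuple of the type of `a`. -/
def HasIncreasingGenerators (r : M → M → Prop) (a : Fin k → M) (S : L.Substructure M) : Prop :=
  ∃ d : Fin k → M, SameType L M d a ∧ IsIncreasing r d ∧ Substructure.closure L (range d) = S

theorem exists_equiv_hasIncreasingGenerators_iff (hM : L.IsUltrahomogeneous M)
    (hRam : RamseyProperty (L.age M)) (r : M → M → Prop) (a : Fin k → M) {V : Set M}
    (hV : V.Finite) :
    ∃ g : M ≃[L] M, ∀ (c d : Fin k → M) (σ τ : Equiv.Perm (Fin k)), range c ⊆ V → range d ⊆ V →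
      SameType L M c (a ∘ σ) → SameType L M d (a ∘ τ) →
      (HasIncreasingGenerators r a (Substructure.closure L (range (g ∘ c))) ↔
        HasIncreasingGenerators r a (Substructure.closure L (range (g ∘ d)))) := by
  obtain ⟨g, hg⟩ := hRam.exists_equiv_forall_iff hM (HasIncreasingGenerators r a)
    (Substructure.fg_closure (finite_range a)) (Substructure.fg_closure hV)
  have nonempty_equiv {e : Fin k → M} {ρ : Equiv.Perm (Fin k)} (he : SameType L M e (a ∘ ρ)) :
      Nonempty (Substructure.closure L (range a) ≃[L] Substructure.closure L (range e)) := by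
    have := he.symm.nonempty_closure_equiv
    rwa [ρ.surjective.range_comp] at this
  refine ⟨g, fun c d σ τ hcV hdV hc hd => ?_⟩
  have := hg _ _ (Substructure.closure_mono hcV) (Substructure.closure_mono hdV)
    (nonempty_equiv hc) (nonempty_equiv hd)
  rwa [map_closure_range, map_closure_range] at this

theorem IsCoherentOrderOn.sameType_comp_perm {r : M → M → Prop}
    (hr : IsCoherentOrderOn L r a univ) (hM : L.IsUltrahomogeneous M)
    (hRam : RamseyProperty (L.age M)) {σ : Equiv.Perm (Fin k)} {F F' : Finset (Fin k → M)}
    (hF : IsUnavoidableFamily L F a) (hF' : IsUnavoidableFamily L F' (a ∘ σ)) :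
    SameType L M a (a ∘ σ) := by
  classical
  obtain ⟨g, hg⟩ := exists_equiv_hasIncreasingGenerators_iff hM hRam r a
    ((F ∪ F').finite_toSet.biUnion fun c _ => finite_range c)
  obtain ⟨c, hcF, hca, hrc⟩ := hF.exists_isIncreasing_comp hr.1 g
  obtain ⟨c', hcF', hca', hrc'⟩ := hF'.exists_isIncreasing_comp hr.1 g
  have range_subset {e : Fin k → M} (he : e ∈ F ∪ F') :
      range e ⊆ ⋃ d ∈ ((F ∪ F' : Finset (Fin k → M)) : Set (Fin k → M)), range d :=
    subset_biUnion_of_mem (u := range) (Finset.mem_coe.2 he)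
  obtain ⟨d, hda, hrd, closure_d⟩ :=
    (hg c c' 1 σ (range_subset (Finset.mem_union_left _ hcF))
      (range_subset (Finset.mem_union_right _ hcF')) hca hca').1
      ⟨g ∘ c, (sameType_equiv_comp g c).trans hca, hrc, rfl⟩
  have hgc' : SameType L M (g ∘ c') (a ∘ σ) := (sameType_equiv_comp g c').trans hca'
  have hdgc' : SameType L M d (g ∘ c') :=
    hr.2 d (g ∘ c') 1 σ (subset_univ _) (subset_univ _) hda hgc' closure_d hrd hrc'
  exact hda.symm.trans (hdgc'.trans hgc')

end StrictSequences

theorem statement13_general {L : FirstOrder.Language.{0, 0}} {M : Type} [L.Structure M]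
    (hM : L.IsUltrahomogeneous M) (hRam : RamseyProperty (L.age M))
    {P : ∀ n : ℕ, Set (Set (L.Formula (Fin n)))}
    (hP : ∀ (n : ℕ), ∀ t ∈ P n, ∀ σ : Equiv.Perm (Fin n),
      (fun φ : L.Formula (Fin n) => φ.relabel σ) '' t ∈ P n)
    (hJN : HasJNAmalgamation L M P) {k : ℕ} {a : Fin k → M} (ha : IsStrictSeq L M P a)
    (σ : Equiv.Perm (Fin k)) : SameType L M a (a ∘ σ) := by
  obtain ⟨r, hr⟩ := exists_isCoherentOrderOn_univ fun s : Finset M =>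
    ha.exists_isCoherentOrderOn s.finite_toSet
  obtain ⟨F, hF⟩ := hJN.exists_isUnavoidableFamily ha.1
  obtain ⟨Fσ, hFσ⟩ := hJN.exists_isUnavoidableFamily (ha.1.comp_perm (hP k) σ)
  exact hr.sameType_comp_perm hM hRam hF hFσ

/-- Theorem 3.4: if the Fraïssé class `K` of a Fraïssé limit `M` equipped with a
freeness relation `P` satisfying JN-amalgamation has the Ramsey property, then the type
of any strict free sequence is invariant under all permutations of the sequence. -/
theorem statement13 (L : FirstOrder.Language.{0, 0})
    [Countable (Σ l, L.Functions l)] (hLrel : Countable (Σ n, L.Relations n))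
    (K : Set (Bundled.{0} L.Structure)) (M : Type) [L.Structure M] [Countable M]
    (hlim : IsFraisseLimit K M)
    (P : ∀ n : ℕ, Set (Set (L.Formula (Fin n))))
    (hP : IsFreenessRelation L M P)
    (hJN : HasJNAmalgamation L M P)
    (hRam : RamseyProperty K)
    (k : ℕ) (a : Fin k → M) (hstrict : IsStrictSeq L M P a) :
    ∀ σ : Equiv.Perm (Fin k), SameType L M a (a ∘ σ) := by
  exact statement13_general hlim.ultrahomogeneous (hlim.age ▸ hRam) hP.2.1 hJN hstrict

end Paper
end

section
/- Suppose M is a Fraïssé structure with age K₀ and M* is an expansion of M by new relation symbols whose age K*₀ = Age(M*) is a reasonable expansion of K₀. Then K_{M*} is a reasonable expansion of K_M: for any A, B ∈ K_M, any embedding f : A → B, and any expansion A* ∈ K_{M*} of A, the map f embeds A* into some expansion B* ∈ K_{M*} of B. -/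
open FirstOrder FirstOrder.Language CategoryTheory Set

universe u v

namespace Paper


variable {L : FirstOrder.Language.{u, v}}

variable {L : FirstOrder.Language.{u, v}}

/-- Index type for the distance relations: rationals in `[0,1]`. -/
def DistIdx : Type := {q : ℚ // 0 ≤ q ∧ q ≤ 1}

private def distRelTy : ℕ → Type
  | 2 => DistIdx
  | _ => Empty

/-- The language `L₀` with binary relations `d(x,y) ≤ q` for `q ∈ ℚ ∩ [0,1]`. -/
def L₀ : FirstOrder.Language.{0, 0} := ⟨fun _ => Empty, distRelTy⟩

instance : L₀.IsRelational := fun _ => inferInstanceAs (IsEmpty Empty)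

private def pRelTy : ℕ → Type
  | 1 => Unit
  | _ => Empty

/-- The language with a single unary predicate `P^M`. -/
def Lp : FirstOrder.Language.{0, 0} := ⟨fun _ => Empty, pRelTy⟩

instance : Lp.IsRelational := fun _ => inferInstanceAs (IsEmpty Empty)

/-- The language `L₀ ∪ L ∪ {P^M}` of the classes `K_M`. -/
def LM (L : FirstOrder.Language.{0, 0}) : FirstOrder.Language.{0, 0} :=
  L₀.sum (L.sum Lp)

instance (L : FirstOrder.Language.{0, 0}) [L.IsRelational] : (LM L).IsRelational :=
  inferInstanceAs (FirstOrder.Language.IsRelational (L₀.sum (L.sum Lp)))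

/-- The distance relation symbols of `LM L`. -/
def distR (L : FirstOrder.Language.{0, 0}) (q : DistIdx) : (LM L).Relations 2 :=
  Sum.inl (show distRelTy 2 from q)

/-- The predicate symbol `P^M` of `LM L`. -/
def pR (L : FirstOrder.Language.{0, 0}) : (LM L).Relations 1 :=
  Sum.inr (Sum.inr (show pRelTy 1 from ()))

/-- The symbols of `L` inside `LM L`. -/
def lR (L : FirstOrder.Language.{0, 0}) {n : ℕ} (R : L.Relations n) : (LM L).Relations n :=
  Sum.inr (Sum.inl R)

/-- The set defined by the predicate `P^M` in an `LM L`-structure. -/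
def pPartSet (L : FirstOrder.Language.{0, 0}) (X : Type*) [(LM L).Structure X] : Set X :=
  {a | Structure.RelMap (pR L) ![a]}

/-- The induced `L`-structure on the `P^M`-part of an `LM L`-structure. -/
def pPartStructure (L : FirstOrder.Language.{0, 0}) [L.IsRelational] (X : Type*)
    [(LM L).Structure X] : L.Structure ↥(pPartSet L X) where
  funMap := fun f _ => isEmptyElim f
  RelMap := fun R t => Structure.RelMap (lR L R) fun i => ((t i : X))

/-- `δ` is the (rational, diameter `≤ 1`) metric of an `LM L`-structure `X` :
it satisfies the metric axioms, is compatible with the distance relations of `X`, and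
distinct elements of the `P^M`-part are at distance `1`. -/
def IsMetricOf (L : FirstOrder.Language.{0, 0}) (X : Type*) [(LM L).Structure X]
    (δ : X → X → ℚ) : Prop :=
  (∀ x y, 0 ≤ δ x y ∧ δ x y ≤ 1) ∧ (∀ x y, δ x y = 0 ↔ x = y) ∧
    (∀ x y, δ x y = δ y x) ∧ (∀ x y z, δ x z ≤ δ x y + δ y z) ∧
    (∀ (q : DistIdx) (x y : X), Structure.RelMap (distR L q) ![x, y] ↔ δ x y ≤ q.1) ∧
    ∀ a b : ↥(pPartSet L X), a ≠ b → δ (a : X) (b : X) = 1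

/-- The class `K_M` : finite `LM L`-structures which are rational metric spaces of
diameter `≤ 1`, in which distinct elements of `P^M` are at distance `1` and the
`P^M`-part carries an `L`-structure belonging to `K`. -/
def KMclass (L : FirstOrder.Language.{0, 0}) [L.IsRelational]
    (K : Set (Bundled.{0} L.Structure)) : Set (Bundled.{0} (LM L).Structure) :=
  {F | Finite F ∧ (∃ δ : F → F → ℚ, IsMetricOf L F δ) ∧
    (⟨↥(pPartSet L F), pPartStructure L F⟩ : Bundled.{0} L.Structure) ∈ K}

/-- The subclass `C_M ⊆ K_M` of structures whose `P^M`-part lies in `C₀`. -/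
def CMclass (L : FirstOrder.Language.{0, 0}) [L.IsRelational]
    (K C : Set (Bundled.{0} L.Structure)) : Set (Bundled.{0} (LM L).Structure) :=
  {F | F ∈ KMclass L K ∧
    (⟨↥(pPartSet L F), pPartStructure L F⟩ : Bundled.{0} L.Structure) ∈ C}

variable {Λ₁ Λ₂ : FirstOrder.Language.{0, 0}}

/-- `K'` is a reasonable expansion of `K` (along the language inclusion `φ`): for all
`A, B ∈ K`, every embedding `f : A → B`, and every expansion `A* ∈ K'` of `A`, the map
`f` embeds `A*` into some expansion `B* ∈ K'` of `B`. -/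
def ReasonableExpansion (φ : Λ₁ →ᴸ Λ₂) (K : Set (Bundled.{0} Λ₁.Structure))
    (K' : Set (Bundled.{0} Λ₂.Structure)) : Prop :=
  ∀ A B : Bundled.{0} Λ₁.Structure, A ∈ K → B ∈ K → ∀ f : A ↪[Λ₁] B,
    ∀ SA : Λ₂.Structure A.α,
      @FirstOrder.Language.LHom.reduct Λ₁ Λ₂ φ A.α SA = A.str →
      (⟨A.α, SA⟩ : Bundled.{0} Λ₂.Structure) ∈ K' →
      ∃ SB : Λ₂.Structure B.α,
        @FirstOrder.Language.LHom.reduct Λ₁ Λ₂ φ B.α SB = B.str ∧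
        (⟨B.α, SB⟩ : Bundled.{0} Λ₂.Structure) ∈ K' ∧
        ∃ g : (⟨A.α, SA⟩ : Bundled.{0} Λ₂.Structure) ↪[Λ₂]
            (⟨B.α, SB⟩ : Bundled.{0} Λ₂.Structure),
          ∀ a : A, g a = f a

/-- `K'` has the expansion property with respect to `K`: every `A' ∈ K'` embeds into
every expansion in `K'` of some `B ∈ K`. -/
def ExpansionProperty (φ : Λ₁ →ᴸ Λ₂) (K : Set (Bundled.{0} Λ₁.Structure))
    (K' : Set (Bundled.{0} Λ₂.Structure)) : Prop :=
  ∀ A' ∈ K', ∃ B ∈ K, ∀ SB : Λ₂.Structure B.α,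
    @FirstOrder.Language.LHom.reduct Λ₁ Λ₂ φ B.α SB = B.str →
    (⟨B.α, SB⟩ : Bundled.{0} Λ₂.Structure) ∈ K' →
    Nonempty (A' ↪[Λ₂] (⟨B.α, SB⟩ : Bundled.{0} Λ₂.Structure))

/-- The expansion is precompact : every member of `K` has only finitely many
expansions in `K'`. -/
def PrecompactPair (φ : Λ₁ →ᴸ Λ₂) (K : Set (Bundled.{0} Λ₁.Structure))
    (K' : Set (Bundled.{0} Λ₂.Structure)) : Prop :=
  ∀ A ∈ K, {S : Λ₂.Structure A.α |
    @FirstOrder.Language.LHom.reduct Λ₁ Λ₂ φ A.α S = A.str ∧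
      (⟨A.α, S⟩ : Bundled.{0} Λ₂.Structure) ∈ K'}.Finite

/-! Only the interpretation of the new symbols on `B` has to be found. Applying the hypothesis to
the `P^M`-parts expands that of `B` compatibly with the given expansion of `A`. Let each new symbol
hold in `B` of the tuples that come from the expanded `P^M`-part together with the `f`-images of
the tuples of `A*`. A tuple of both kinds comes from the `P^M`-part of `A`, where the two
prescriptions agree, so nothing is added on either piece. -/

open Structure (RelMap)

theorem reduct_eq_of_isExpansionOn {Λ Λ' : FirstOrder.Language} (φ : Λ →ᴸ Λ') {X : Type*}
    [S : Λ.Structure X] [Λ'.Structure X] [φ.IsExpansionOn X] : φ.reduct X = S :=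
  Structure.ext (funext₂ fun _ F => funext (φ.map_onFunction F))
    (funext₂ fun _ R => funext (φ.map_onRelation R))

section UnionStructure

variable {Λ : FirstOrder.Language.{u, v}} [Λ.IsRelational] {X Y Z : Type*}

theorem structure_ext_of_isRelational {S T : Λ.Structure X}
    (h : ∀ {n : ℕ} (R : Λ.Relations n) (t : Fin n → X), S.RelMap R t ↔ T.RelMap R t) : S = T :=
  Structure.ext (funext₂ fun _ F => isEmptyElim F)
    (funext₂ fun _ R => funext fun t => propext (h R t))

variable [Λ.Structure X] [Λ.Structure Y]

/-- The structure on `Z` whose relations are the unions of the images of the relations of `X` and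
of `Y` under the maps `i` and `j`. -/
@[reducible]
def unionStructure (i : X → Z) (j : Y → Z) : Λ.Structure Z where
  funMap := fun F _ => isEmptyElim F
  RelMap := fun R t => (∃ s, i ∘ s = t ∧ RelMap R s) ∨ ∃ s, j ∘ s = t ∧ RelMap R s

variable (Λ) in
/-- The relations of `X` and `Y` agree on the tuples of `Z` that come from both along `i` and
`j`. -/
def RelationsAgree (i : X → Z) (j : Y → Z) : Prop :=
  ∀ {n : ℕ} (R : Λ.Relations n) (s : Fin n → X) (t : Fin n → Y), i ∘ s = j ∘ t →
    (RelMap R s ↔ RelMap R t)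

variable {i : X → Z} {j : Y → Z} {n : ℕ}

theorem relMap_unionStructure_comp_left (hi : Function.Injective i) (hij : RelationsAgree Λ i j)
    (R : Λ.Relations n) (s : Fin n → X) :
    (unionStructure i j).RelMap R (i ∘ s) ↔ RelMap R s := by
  constructor
  · rintro (⟨s', hs', hR⟩ | ⟨t, ht, hR⟩)
    · rwa [← hi.comp_left hs']
    · exact (hij R s t ht.symm).2 hR
  · exact fun hR => Or.inl ⟨s, rfl, hR⟩

theorem relMap_unionStructure_comp_right (hj : Function.Injective j) (hij : RelationsAgree Λ i j)
    (R : Λ.Relations n) (t : Fin n → Y) :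
    (unionStructure i j).RelMap R (j ∘ t) ↔ RelMap R t := by
  constructor
  · rintro (⟨s, hs, hR⟩ | ⟨t', ht', hR⟩)
    · exact (hij R s t hs).1 hR
    · rwa [← hj.comp_left ht']
  · exact fun hR => Or.inr ⟨t, rfl, hR⟩

end UnionStructure

section PPart

variable {L : FirstOrder.Language.{0, 0}} {A B : Type*} [(LM L).Structure A] [(LM L).Structure B]

theorem apply_mem_pPartSet_iff (f : A ↪[LM L] B) {a : A} :
    f a ∈ pPartSet L B ↔ a ∈ pPartSet L A := by
  simpa only [Matrix.vec_single_eq_const, Function.comp_def, pPartSet, mem_ofPred_eq]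
    using f.map_rel (pR L) ![a]

/-- The restriction of an embedding of `LM L`-structures to the `P^M`-parts, as a map. -/
def pPartMap (f : A ↪[LM L] B) (a : pPartSet L A) : pPartSet L B :=
  ⟨f a, (apply_mem_pPartSet_iff f).2 a.2⟩

/-- The restriction of an embedding of `LM L`-structures to the `P^M`-parts, as an embedding of
`L`-structures. -/
def pPartEmbedding [L.IsRelational] (f : A ↪[LM L] B) :
    @Embedding L (pPartSet L A) (pPartSet L B) (pPartStructure L A) (pPartStructure L B) :=
  letI := pPartStructure L A
  letI := pPartStructure L B
  { toFun := pPartMap f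
    inj' := fun _ _ h => Subtype.ext (f.injective (congrArg Subtype.val h))
    map_fun' := fun F _ => isEmptyElim F
    map_rel' := fun R t => f.map_rel (lR L R) (Subtype.val ∘ t) }

theorem relationsAgree_pPartSet_val {L' : FirstOrder.Language.{0, 0}} [L'.Structure A]
    [L'.Structure (pPartSet L B)] (f : A ↪[LM L] B)
    (hf : ∀ {n : ℕ} (R : L'.Relations n) (t : Fin n → pPartSet L A),
      RelMap R (pPartMap f ∘ t) ↔ RelMap R (Subtype.val ∘ t)) :
    RelationsAgree L' f (Subtype.val : pPartSet L B → B) := by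
  intro n R s t hst
  have hfs (k : Fin n) : f (s k) = t k := congrFun hst k
  have hs (k : Fin n) : s k ∈ pPartSet L A :=
    (apply_mem_pPartSet_iff f).1 (hfs k ▸ (t k).2)
  have ht : pPartMap f ∘ (fun k => ⟨s k, hs k⟩) = t :=
    funext fun k => Subtype.ext (hfs k)
  rw [← ht]
  exact (hf R fun k => ⟨s k, hs k⟩).symm

end PPart

section Expansion

variable (L L' : FirstOrder.Language.{0, 0})

/-- The inclusion of the language of `K_M` into that of `K_{M*}`, where `L'` consists of the symbols
that `M*` adds to those of `M`. -/
abbrev expansionLHom : LM L →ᴸ LM (L.sum L') :=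
  (LHom.id L₀).sumMap ((LHom.sumInl : L →ᴸ L.sum L').sumMap (LHom.id Lp))

/-- The inclusion of the new symbols into the language of `K_{M*}`. -/
abbrev newLHom : L' →ᴸ LM (L.sum L') :=
  (LHom.sumInr : _ →ᴸ L₀.sum ((L.sum L').sum Lp)).comp (LHom.sumInl.comp LHom.sumInr)

variable [L.IsRelational] [L'.IsRelational]

/-- The expansion of an `LM L`-structure in which the symbols of `L'` are interpreted by a given
`L'`-structure on the same set. -/
@[reducible]
def expansionBy (X : Type*) [(LM L).Structure X] [L'.Structure X] :
    (LM (L.sum L')).Structure X where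
  funMap F _ := isEmptyElim F
  RelMap
    | Sum.inl R, t => RelMap (L := LM L) (Sum.inl R) t
    | Sum.inr (Sum.inl (Sum.inl R)), t => RelMap (L := LM L) (Sum.inr (Sum.inl R)) t
    | Sum.inr (Sum.inl (Sum.inr R)), t => RelMap R t
    | Sum.inr (Sum.inr R), t => RelMap (L := LM L) (Sum.inr (Sum.inr R)) t

variable {L L'}

theorem isExpansionOn_expansionBy {X : Type*} [(LM L).Structure X] [L'.Structure X] :
    @LHom.IsExpansionOn _ _ (expansionLHom L L') X _ (expansionBy L L' X) :=
  letI := expansionBy L L' X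
  { map_onFunction := fun F => isEmptyElim F
    map_onRelation := by rintro n (R | R | R) t <;> rfl }

theorem pPartStructure_expansionBy {X : Type*} [(LM L).Structure X] [L'.Structure X]
    {S : (L.sum L').Structure (pPartSet L X)}
    (hS : (LHom.sumInl : L →ᴸ L.sum L').reduct (pPartSet L X) = pPartStructure L X)
    (hnew : ∀ {n : ℕ} (R : L'.Relations n) (t : Fin n → pPartSet L X),
      RelMap R (Subtype.val ∘ t) ↔ S.RelMap (Sum.inr R) t) :
    @pPartStructure (L.sum L') _ X (expansionBy L L' X) = S := by
  apply structure_ext_of_isRelational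
  rintro n (R | R) t
  · exact iff_of_eq (congrArg (fun T : L.Structure (pPartSet L X) => T.RelMap R t) hS.symm)
  · exact hnew R t

theorem expansionBy_mem_KMclass {K : Set (Bundled.{0} L.Structure)}
    {K' : Set (Bundled.{0} (L.sum L').Structure)} {X : Bundled.{0} (LM L).Structure}
    [L'.Structure X] (hX : X ∈ KMclass L K)
    (hP : ⟨pPartSet L X, @pPartStructure (L.sum L') _ X (expansionBy L L' X)⟩ ∈ K') :
    ⟨X, expansionBy L L' X⟩ ∈ KMclass (L.sum L') K' :=
  ⟨hX.1, hX.2.1, hP⟩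

/-- An embedding of `LM L`-structures that preserves and reflects the new symbols, as an embedding
of the expansions. -/
def embeddingOfNewSymbols {A B : Type*} [(LM L).Structure A] [(LM L).Structure B]
    [(LM (L.sum L')).Structure A] [(LM (L.sum L')).Structure B]
    [(expansionLHom L L').IsExpansionOn A] [(expansionLHom L L').IsExpansionOn B]
    (f : A ↪[LM L] B)
    (hf : ∀ {n : ℕ} (R : L'.Relations n) (t : Fin n → A),
      RelMap ((newLHom L L').onRelation R) (f ∘ t) ↔ RelMap ((newLHom L L').onRelation R) t) :
    A ↪[LM (L.sum L')] B where
  toEmbedding := f.toEmbedding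
  map_fun' F _ := isEmptyElim F
  map_rel' {n} R' t := by
    have hold (R : (LM L).Relations n) : RelMap ((expansionLHom L L').onRelation R) (f ∘ t) ↔
        RelMap ((expansionLHom L L').onRelation R) t := by
      simp only [LHom.map_onRelation, f.map_rel]
    rcases R' with R | (R | R) | R
    · exact hold (Sum.inl R)
    · exact hold (Sum.inr (Sum.inl R))
    · exact hf R t
    · exact hold (Sum.inr (Sum.inr R))

end Expansion

theorem statement16_general {L L' : FirstOrder.Language.{0, 0}} [L.IsRelational] [L'.IsRelational]
    {K : Set (Bundled.{0} L.Structure)} {K' : Set (Bundled.{0} (L.sum L').Structure)}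
    (hK : ReasonableExpansion (LHom.sumInl : L →ᴸ L.sum L') K K') :
    ReasonableExpansion (expansionLHom L L') (KMclass L K) (KMclass (L.sum L') K') := by
  rintro ⟨A, RA⟩ ⟨B, RB⟩ hA hB f (SA : (LM (L.sum L')).Structure A) hSA hA'
  obtain rfl : (expansionLHom L L').reduct A = RA := hSA
  let _ := (expansionLHom L L').reduct A
  let SPA : (L.sum L').Structure (pPartSet L A) := @pPartStructure (L.sum L') _ A SA
  obtain ⟨(SPB : (L.sum L').Structure (pPartSet L B)), hSPB, hSPBK,
    (g : pPartSet L A ↪[L.sum L'] pPartSet L B), hg⟩ := hK ⟨pPartSet L A, pPartStructure L A⟩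
      ⟨pPartSet L B, pPartStructure L B⟩ hA.2.2 hB.2.2 (pPartEmbedding f) SPA rfl hA'.2.2
  have hgf : ⇑g = pPartMap f := funext hg
  let _ := (newLHom L L').reduct A
  let _ := (LHom.sumInr : L' →ᴸ L.sum L').reduct (pPartSet L B)
  have hagree : RelationsAgree L' f (Subtype.val : pPartSet L B → B) :=
    relationsAgree_pPartSet_val f fun R t => hgf ▸ g.map_rel (Sum.inr R) t
  let _ : L'.Structure B := unionStructure f (Subtype.val : pPartSet L B → B)
  have hP := pPartStructure_expansionBy hSPB
    (relMap_unionStructure_comp_right Subtype.val_injective hagree)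
  let _ := expansionBy L L' B
  have : (expansionLHom L L').IsExpansionOn B := isExpansionOn_expansionBy
  exact ⟨expansionBy L L' B, reduct_eq_of_isExpansionOn _, expansionBy_mem_KMclass hB (hP ▸ hSPBK),
    embeddingOfNewSymbols f (relMap_unionStructure_comp_left f.injective hagree), fun _ => rfl⟩

/-- If `Age(M*)` is a reasonable expansion of `Age(M) = K₀`, then `K_{M*}` is a
reasonable expansion of `K_M`. -/
theorem statement16 (L L' : FirstOrder.Language.{0, 0}) [L.IsRelational] [L'.IsRelational]
    (hL : Countable (Σ n, L.Relations n)) (hL' : Countable (Σ n, L'.Relations n))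
    [inst : L.Structure ℕ] [instx : (L.sum L').Structure ℕ]
    (hexp : (LHom.sumInl : L →ᴸ L.sum L').reduct ℕ = inst)
    (hM : IsFraisseLimit (FirstOrder.Language.age L ℕ) ℕ)
    (hreas : ReasonableExpansion (LHom.sumInl : L →ᴸ L.sum L')
      (FirstOrder.Language.age L ℕ) (FirstOrder.Language.age (L.sum L') ℕ)) :
    ReasonableExpansion
      ((LHom.id L₀).sumMap ((LHom.sumInl : L →ᴸ L.sum L').sumMap (LHom.id Lp)))
      (KMclass L (FirstOrder.Language.age L ℕ))
      (KMclass (L.sum L') (FirstOrder.Language.age (L.sum L') ℕ)) :=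
  statement16_general hreas

end Paper
end
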